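/- arXiv:2511.17734 — 12 statements merged into one kernel-verified Lean document; each statement's English description precedes it below -/
import Mathlib

section
/- Let V be a finite-dimensional real vector space and (A, ω) a k-contact linear structure on V, and let e_1, …, e_k denote the standard basis of ℝ^k. Then there exists a unique family of vectors r_1, …, r_k ∈ V such that A(r_α) = e_α and ω(r_α, w) = 0 for all w ∈ V and all α ∈ {1,…,k}; moreover, ker ω = span{r_1, …, r_k}. (This is the pointwise linear-algebraic content of the existence and uniqueness of Reeb vector fields of a co-oriented k-contact manifold.) -/
/-- **Existence and uniqueness of Reeb vectors for a k-contact linear structure.**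
A k-contact linear structure on a finite-dimensional real vector space `V` is a pair
`(A, ω)` where `A : V → ℝ^k` is linear and `ω : V × V → ℝ^k` is alternating bilinear,
with `ker A` nonzero of codimension `k`, `ker ω` of dimension `k`, and
`ker A ∩ ker ω = 0`. Then there is a unique family `r : Fin k → V` with
`A (r α) = e_α` and `ω (r α) w = 0` for all `w`; moreover `ker ω = span {r_1, …, r_k}`. -/
theorem stmt_0 (k : ℕ) (V : Type*) [AddCommGroup V] [Module ℝ V]
    [FiniteDimensional ℝ V]
    (A : V →ₗ[ℝ] (Fin k → ℝ)) (ω : V →ₗ[ℝ] V →ₗ[ℝ] (Fin k → ℝ))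
    (hAlt : ∀ v : V, ω v v = 0)
    (hkerA_ne : LinearMap.ker A ≠ ⊥)
    (hcodim : Module.finrank ℝ V = Module.finrank ℝ (LinearMap.ker A) + k)
    (hkerω : Module.finrank ℝ (LinearMap.ker ω) = k)
    (hint : LinearMap.ker A ⊓ LinearMap.ker ω = ⊥) :
    (∃! r : Fin k → V, ∀ α : Fin k,
        A (r α) = Pi.single α 1 ∧ ∀ w : V, ω (r α) w = 0) ∧
    (∀ r : Fin k → V,
      (∀ α : Fin k, A (r α) = Pi.single α 1 ∧ ∀ w : V, ω (r α) w = 0) →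
      LinearMap.ker ω = Submodule.span ℝ (Set.range r)) := by
  have key : ∀ x y : V, x ∈ LinearMap.ker ω → y ∈ LinearMap.ker ω → A x = A y → x = y := by
    intro x y hx hy hxy
    have h : x - y ∈ LinearMap.ker A ⊓ LinearMap.ker ω := by
      refine ⟨?_, Submodule.sub_mem _ hx hy⟩
      simp [hxy]
    rw [hint, Submodule.mem_bot] at h
    exact sub_eq_zero.mp h
  have hmem : ∀ x : V, (∀ w, ω x w = 0) → x ∈ LinearMap.ker ω := by
    intro x hx
    rw [LinearMap.mem_ker]
    ext1 w
    simpa using hx w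
  have hinj : Function.Injective (A.domRestrict (LinearMap.ker ω)) := by
    intro x y hxy
    exact Subtype.ext (key x y x.2 y.2 hxy)
  have hsurj : Function.Surjective (A.domRestrict (LinearMap.ker ω)) :=
    (LinearMap.injective_iff_surjective_of_finrank_eq_finrank (by simpa using hkerω)).mp hinj
  refine ⟨?_, ?_⟩
  · choose r hr using fun α : Fin k => hsurj (Pi.single α 1)
    refine ⟨fun α => (r α : V), fun α => ⟨hr α, fun w => ?_⟩, ?_⟩
    · have h := (r α).2
      rw [LinearMap.mem_ker] at h
      simp [h]
    · intro s hs
      funext α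
      exact key _ _ (hmem _ (hs α).2) (r α).2 ((hs α).1.trans (hr α).symm)
  · intro r hr
    have hrm : ∀ α, r α ∈ LinearMap.ker ω := fun α => hmem _ (hr α).2
    apply le_antisymm
    · intro v hv
      have h : v = ∑ α, A v α • r α := by
        refine key _ _ hv (Submodule.sum_mem _ fun α _ => Submodule.smul_mem _ _ (hrm α)) ?_
        rw [map_sum]
        simp only [map_smul, (hr _).1]
        exact pi_eq_sum_univ' (A v) |>.trans (by
          refine Finset.sum_congr rfl fun α _ => ?_
          congr 1)
      rw [h]
      exact Submodule.sum_mem _ fun α _ =>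
        Submodule.smul_mem _ _ (Submodule.subset_span ⟨α, rfl⟩)
    · rw [Submodule.span_le]
      rintro _ ⟨α, rfl⟩
      exact hrm α
end

section
/- Let V be a finite-dimensional real vector space and (A, ω) a k-contact linear structure on V. Then the restriction of ω to ker A is non-degenerate: if v ∈ ker A satisfies ω(v, w) = 0 for all w ∈ ker A, then v = 0. (Pointwise form of the proposition that the kernel of a k-contact form is maximally non-integrable, i.e. dη is non-degenerate on ker η.) -/
/-- **Maximal non-integrability (pointwise form).** For a k-contact linear structure
`(A, ω)` on a finite-dimensional real vector space `V` (i.e. `A : V → ℝ^k` linear,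
`ω : V × V → ℝ^k` alternating bilinear, `ker A` nonzero of codimension `k`,
`ker ω` of dimension `k`, and `ker A ∩ ker ω = 0`), the restriction of `ω` to
`ker A` is non-degenerate: if `v ∈ ker A` satisfies `ω(v, w) = 0` for all
`w ∈ ker A`, then `v = 0`. -/
theorem stmt_1 (k : ℕ) (V : Type*) [AddCommGroup V] [Module ℝ V]
    [FiniteDimensional ℝ V]
    (A : V →ₗ[ℝ] (Fin k → ℝ)) (ω : V →ₗ[ℝ] V →ₗ[ℝ] (Fin k → ℝ))
    (hAlt : ∀ v : V, ω v v = 0)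
    (hkerA_ne : LinearMap.ker A ≠ ⊥)
    (hcodim : Module.finrank ℝ V = Module.finrank ℝ (LinearMap.ker A) + k)
    (hkerω : Module.finrank ℝ (LinearMap.ker ω) = k)
    (hint : LinearMap.ker A ⊓ LinearMap.ker ω = ⊥) :
    ∀ v ∈ LinearMap.ker A, (∀ w ∈ LinearMap.ker A, ω v w = 0) → v = 0 := by
  intro v hv h
  have hsup : LinearMap.ker A ⊔ LinearMap.ker ω = ⊤ := by
    apply Submodule.eq_top_of_finrank_eq
    have h1 := Submodule.finrank_sup_add_finrank_inf_eq (LinearMap.ker A) (LinearMap.ker ω)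
    rw [hint, finrank_bot] at h1
    omega
  have hω : v ∈ LinearMap.ker ω := by
    rw [LinearMap.mem_ker]
    apply LinearMap.ext
    intro u
    have hu : u ∈ LinearMap.ker A ⊔ LinearMap.ker ω := by
      rw [hsup]
      exact Submodule.mem_top
    obtain ⟨a, ha, r, hr, rfl⟩ := Submodule.mem_sup.mp hu
    rw [LinearMap.mem_ker] at hr
    have h2 := hAlt (v + r)
    simp only [map_add, LinearMap.add_apply, hAlt, hr, LinearMap.zero_apply, zero_add,
      add_zero] at h2
    rw [map_add, h a ha, h2]
    simp
  have h3 : v ∈ LinearMap.ker A ⊓ LinearMap.ker ω := ⟨hv, hω⟩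
  rw [hint] at h3
  exact (Submodule.mem_bot ℝ).mp h3
end

section
/- Let η = (η^1, …, η^k) be a smooth ℝ^k-valued differential one-form on an open set U ⊆ ℝ^m with Reeb vector fields R_1, …, R_k satisfying [R_β, R_γ] = 0 for all β, γ, and let X be an η-Hamiltonian vector field with η-Hamiltonian k-function h = (h^1, …, h^k). Then for each β ∈ {1,…,k}, the Lie bracket [R_β, X] is again an η-Hamiltonian vector field, whose η-Hamiltonian k-function is R_βh = (R_βh^1, …, R_βh^k); that is, ι_{[R_β,X]}η^α = −R_βh^α and ι_{[R_β,X]}dη^α = d(R_βh^α) − Σ_{γ=1}^k (R_γ(R_βh^α))·η^γ for all α. -/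
/-- Lie bracket of vector fields: `[X, Y](x) = DY(x)(X(x)) − DX(x)(Y(x))`. -/
noncomputable def lieBr {E : Type*} [NormedAddCommGroup E] [NormedSpace ℝ E]
    (X Y : E → E) : E → E :=
  fun x => fderiv ℝ Y x (X x) - fderiv ℝ X x (Y x)

/-- Exterior derivative of a one-form: `dθ_x(u, v) = Dθ(x)(u)(v) − Dθ(x)(v)(u)`. -/
noncomputable def extD {E : Type*} [NormedAddCommGroup E] [NormedSpace ℝ E]
    (θ : E → (E →L[ℝ] ℝ)) (x u v : E) : ℝ :=
  fderiv ℝ θ x u v - fderiv ℝ θ x v u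

theorem aux_two2 : (2 : WithTop ℕ∞) ≤ ((⊤ : ℕ∞) : WithTop ℕ∞) :=
  WithTop.coe_le_coe.2 (le_top : (2 : ℕ∞) ≤ ⊤)

theorem aux_two : (1 + 1 : WithTop ℕ∞) ≤ ((⊤ : ℕ∞) : WithTop ℕ∞) := by
  rw [one_add_one_eq_two]
  exact aux_two2

/-- Derivative of a pairing. -/
theorem aux_pair {E F G : Type*} [NormedAddCommGroup E] [NormedSpace ℝ E]
    [NormedAddCommGroup F] [NormedSpace ℝ F] [NormedAddCommGroup G] [NormedSpace ℝ G]
    {A : E → (F →L[ℝ] G)} {Y : E → F} {x : E}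
    (hA : DifferentiableAt ℝ A x) (hY : DifferentiableAt ℝ Y x) (u : E) :
    fderiv ℝ (fun y => A y (Y y)) x u = fderiv ℝ A x u (Y x) + A x (fderiv ℝ Y x u) := by
  rw [fderiv_clm_apply hA hY]
  simp [add_comm]

/-- Derivative of `y ↦ dθ_y(Y(y), v)`. -/
theorem aux_extD {E : Type*} [NormedAddCommGroup E] [NormedSpace ℝ E]
    {θ : E → (E →L[ℝ] ℝ)} {Y : E → E} {x : E}
    (hA : DifferentiableAt ℝ (fderiv ℝ θ) x) (hY : DifferentiableAt ℝ Y x) (v u : E) :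
    fderiv ℝ (fun y => extD θ y (Y y) v) x u =
      fderiv ℝ (fderiv ℝ θ) x u (Y x) v - fderiv ℝ (fderiv ℝ θ) x u v (Y x)
        + extD θ x (fderiv ℝ Y x u) v := by
  have h1 : DifferentiableAt ℝ (fun y => fderiv ℝ θ y (Y y)) x := hA.clm_apply hY
  have h2 : DifferentiableAt ℝ (fun y => fderiv ℝ θ y v) x :=
    hA.clm_apply (differentiableAt_const v)
  have h3 : DifferentiableAt ℝ (fun y => fderiv ℝ θ y (Y y) v) x :=
    h1.clm_apply (differentiableAt_const v)
  have h4 : DifferentiableAt ℝ (fun y => fderiv ℝ θ y v (Y y)) x := h2.clm_apply hY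
  unfold extD
  rw [fderiv_fun_sub h3 h4, ContinuousLinearMap.sub_apply,
    aux_pair h1 (differentiableAt_const v), aux_pair hA hY, aux_pair h2 hY,
    aux_pair hA (differentiableAt_const v)]
  simp
  ring

/-- **`[R_β, X_h] = X_{R_βh}`.** If `X` is an `η`-Hamiltonian vector field with
`η`-Hamiltonian k-function `h` relative to a smooth `ℝ^k`-valued one-form `η` on an
open `U ⊆ ℝ^m` with commuting Reeb vector fields `R_1, …, R_k`, then each
`[R_β, X]` is again `η`-Hamiltonian, with `η`-Hamiltonian k-function
`R_βh = (R_βh^1, …, R_βh^k)`. -/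
theorem stmt_6 (m k : ℕ) (U : Set (Fin m → ℝ)) (hU : IsOpen U)
    (η : Fin k → (Fin m → ℝ) → ((Fin m → ℝ) →L[ℝ] ℝ))
    (hη : ∀ α, ContDiffOn ℝ (⊤ : ℕ∞) (η α) U)
    (R : Fin k → (Fin m → ℝ) → (Fin m → ℝ))
    (hRs : ∀ α, ContDiffOn ℝ (⊤ : ℕ∞) (R α) U)
    (hReeb : ∀ x ∈ U, ∀ α β : Fin k,
      η β x (R α x) = (if α = β then (1 : ℝ) else 0) ∧
      ∀ v, extD (η β) x (R α x) v = 0)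
    (hRcomm : ∀ x ∈ U, ∀ β γ : Fin k, lieBr (R β) (R γ) x = 0)
    (X : (Fin m → ℝ) → (Fin m → ℝ)) (hX : ContDiffOn ℝ (⊤ : ℕ∞) X U)
    (h : Fin k → (Fin m → ℝ) → ℝ)
    (hhs : ∀ α, ContDiffOn ℝ (⊤ : ℕ∞) (h α) U)
    (hHam : ∀ x ∈ U, ∀ α : Fin k,
      η α x (X x) = -(h α x) ∧
      ∀ v, extD (η α) x (X x) v =
        fderiv ℝ (h α) x v - ∑ β, fderiv ℝ (h α) x (R β x) * η β x v) :
    ∀ β : Fin k, ∀ x ∈ U, ∀ α : Fin k,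
      η α x (lieBr (R β) X x) = -(fderiv ℝ (h α) x (R β x)) ∧
      ∀ v, extD (η α) x (lieBr (R β) X x) v =
        fderiv ℝ (fun y => fderiv ℝ (h α) y (R β y)) x v -
          ∑ γ, fderiv ℝ (fun y => fderiv ℝ (h α) y (R β y)) x (R γ x) * η γ x v := by
  intro β x hx α
  have hUx : U ∈ nhds x := hU.mem_nhds hx
  have dη : ∀ α, DifferentiableAt ℝ (η α) x := fun α =>
    ((hη α).contDiffAt hUx).differentiableAt (by simp)
  have dR : ∀ α, DifferentiableAt ℝ (R α) x := fun α =>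
    ((hRs α).contDiffAt hUx).differentiableAt (by simp)
  have dX : DifferentiableAt ℝ X x := (hX.contDiffAt hUx).differentiableAt (by simp)
  have dη' : DifferentiableAt ℝ (fderiv ℝ (η α)) x :=
    (((hη α).contDiffAt hUx).fderiv_right (m := 1) aux_two).differentiableAt
      (by simp)
  have df' : DifferentiableAt ℝ (fderiv ℝ (h α)) x :=
    (((hhs α).contDiffAt hUx).fderiv_right (m := 1) aux_two).differentiableAt
      (by simp)
  have symη : ∀ u v, fderiv ℝ (fderiv ℝ (η α)) x u v = fderiv ℝ (fderiv ℝ (η α)) x v u := by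
    intro u v
    exact ((hη α).contDiffAt hUx).isSymmSndFDerivAt
      (by simpa using aux_two2) u v
  have symf : ∀ u v, fderiv ℝ (fderiv ℝ (h α)) x u v = fderiv ℝ (fderiv ℝ (h α)) x v u := by
    intro u v
    exact ((hhs α).contDiffAt hUx).isSymmSndFDerivAt
      (by simpa using aux_two2) u v
  -- derivative of `η^γ(R_β) = const`
  have e1 : ∀ γ u, fderiv ℝ (η γ) x u (R β x) + η γ x (fderiv ℝ (R β) x u) = 0 := by
    intro γ u
    rw [← aux_pair (dη γ) (dR β)]
    have : (fun y => η γ y (R β y)) =ᶠ[nhds x] fun _ => (if β = γ then (1 : ℝ) else 0) := by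
      filter_upwards [hUx] with y hy using (hReeb y hy β γ).1
    rw [this.fderiv_eq]
    simp
  have e2 : ∀ u, fderiv ℝ (η α) x u (X x) + η α x (fderiv ℝ X x u) = -fderiv ℝ (h α) x u := by
    intro u
    rw [← aux_pair (dη α) dX]
    have : (fun y => η α y (X y)) =ᶠ[nhds x] fun y => -(h α y) := by
      filter_upwards [hUx] with y hy using (hHam y hy α).1
    rw [this.fderiv_eq]
    simp
  refine ⟨?_, ?_⟩
  · have a := e1 α (X x)
    have b := e2 (R β x)
    have c := (hReeb x hx β α).2 (X x)
    unfold extD at c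
    simp only [lieBr, map_sub]
    linarith
  intro v
  -- derivative of `dη(R_β, v) = 0`
  have e3 : ∀ v u, fderiv ℝ (fderiv ℝ (η α)) x u (R β x) v
      - fderiv ℝ (fderiv ℝ (η α)) x u v (R β x) + extD (η α) x (fderiv ℝ (R β) x u) v = 0 := by
    intro v u
    rw [← aux_extD dη' (dR β)]
    have : (fun y => extD (η α) y (R β y) v) =ᶠ[nhds x] fun _ => 0 := by
      filter_upwards [hUx] with y hy using (hReeb y hy β α).2 v
    rw [this.fderiv_eq]
    simp
  -- derivative of the Hamiltonian equation
  have dfR : ∀ γ, DifferentiableAt ℝ (fun y => fderiv ℝ (h α) y (R γ y)) x := fun γ =>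
    df'.clm_apply (dR γ)
  have dηv : ∀ γ, DifferentiableAt ℝ (fun y => η γ y v) x := fun γ =>
    (dη γ).clm_apply (differentiableAt_const v)
  have e4 : ∀ u, fderiv ℝ (fderiv ℝ (η α)) x u (X x) v
      - fderiv ℝ (fderiv ℝ (η α)) x u v (X x) + extD (η α) x (fderiv ℝ X x u) v
      = fderiv ℝ (fderiv ℝ (h α)) x u v
        - ∑ γ, ((fderiv ℝ (fderiv ℝ (h α)) x u (R γ x) + fderiv ℝ (h α) x (fderiv ℝ (R γ) x u))
            * η γ x v + fderiv ℝ (h α) x (R γ x) * fderiv ℝ (η γ) x u v) := by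
    intro u
    rw [← aux_extD dη' dX]
    have : (fun y => extD (η α) y (X y) v) =ᶠ[nhds x] fun y =>
        fderiv ℝ (h α) y v - ∑ γ, fderiv ℝ (h α) y (R γ y) * η γ y v := by
      filter_upwards [hUx] with y hy using (hHam y hy α).2 v
    rw [this.fderiv_eq, fderiv_fun_sub (df'.clm_apply (differentiableAt_const v))
      (DifferentiableAt.fun_sum fun γ _ => (dfR γ).fun_mul (dηv γ)),
      ContinuousLinearMap.sub_apply, aux_pair df' (differentiableAt_const v),
      fderiv_fun_sum (fun γ _ => (dfR γ).fun_mul (dηv γ)), ContinuousLinearMap.sum_apply]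
    congr 1
    · simp
    · refine Finset.sum_congr rfl fun γ _ => ?_
      rw [fderiv_fun_mul (dfR γ) (dηv γ), ContinuousLinearMap.add_apply,
        ContinuousLinearMap.smul_apply, ContinuousLinearMap.smul_apply,
        aux_pair (dη γ) (differentiableAt_const v), aux_pair df' (dR γ)]
      simp
      ring
  have e5 := (hHam x hx α).2 (fderiv ℝ (R β) x v)
  have hs : extD (η α) x (lieBr (R β) X x) v =
      extD (η α) x (fderiv ℝ X x (R β x)) v - extD (η α) x (fderiv ℝ (R β) x (X x)) v := by
    simp only [lieBr, extD, map_sub, ContinuousLinearMap.sub_apply]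
    ring
  have hsk : extD (η α) x (fderiv ℝ (R β) x v) (X x)
      = -extD (η α) x (X x) (fderiv ℝ (R β) x v) := by
    simp only [extD]
    ring
  have a1 := e4 (R β x)
  have a2 := e3 v (X x)
  have a3 := e3 (X x) v
  rw [symη (R β x) (X x), symη (R β x) v] at a1
  rw [symη (X x) v] at a2
  rw [hsk, e5] at a3
  have hsum : ∑ γ, fderiv ℝ (fun y => fderiv ℝ (h α) y (R β y)) x (R γ x) * η γ x v
      = ∑ γ, ((fderiv ℝ (fderiv ℝ (h α)) x (R β x) (R γ x)
            + fderiv ℝ (h α) x (fderiv ℝ (R γ) x (R β x))) * η γ x v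
            + fderiv ℝ (h α) x (R γ x) * fderiv ℝ (η γ) x (R β x) v)
        + ∑ γ, fderiv ℝ (h α) x (R γ x) * η γ x (fderiv ℝ (R β) x v) := by
    rw [← Finset.sum_add_distrib]
    refine Finset.sum_congr rfl fun γ _ => ?_
    have c1 := hRcomm x hx β γ
    have c2 := (hReeb x hx β γ).2 v
    have c3 := e1 γ v
    have c1' : fderiv ℝ (R γ) x (R β x) = fderiv ℝ (R β) x (R γ x) := sub_eq_zero.mp c1
    unfold extD at c2
    have c4 : η γ x (fderiv ℝ (R β) x v) = -fderiv ℝ (η γ) x (R β x) v := by linarith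
    rw [aux_pair df' (dR β), c1', c4, symf (R γ x) (R β x)]
    ring
  rw [hsum, hs, aux_pair df' (dR β), symf v (R β x)]
  linarith
end

section
/- Let η = (η^1, …, η^k) be a smooth ℝ^k-valued differential one-form on an open set U ⊆ ℝ^m with Reeb vector fields R_1, …, R_k, and let X_1, X_2 be η-Hamiltonian vector fields with η-Hamiltonian k-functions h_1 = (h_1^1,…,h_1^k) and h_2 = (h_2^1,…,h_2^k), respectively. Then for each α ∈ {1,…,k} and all x ∈ U: η^α_x([X_1, X_2](x)) = −(X_1h_2^α)(x) − Σ_{β=1}^k h_2^β(x)·(R_βh_1^α)(x). (In the notation of the paper: {h_1, h_2}_η = −L_{X_{h_1}}h_2 − R_{h_2}h_1, where {h_1,h_2}_η := η([X_{h_1}, X_{h_2}]).) -/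
/-- **The k-contact bracket formula `{h_1, h_2}_η = −X_{h_1}h_2 − R_{h_2}h_1`.**
If `X_1, X_2` are `η`-Hamiltonian vector fields with `η`-Hamiltonian k-functions
`h_1, h_2` relative to a smooth `ℝ^k`-valued one-form `η` on an open `U ⊆ ℝ^m` with
Reeb vector fields `R_1, …, R_k`, then for every `α` and `x ∈ U`:
`η^α([X_1, X_2])(x) = −(X_1h_2^α)(x) − Σ_β h_2^β(x)·(R_βh_1^α)(x)`. -/
theorem stmt_8 (m k : ℕ) (U : Set (Fin m → ℝ)) (hU : IsOpen U)
    (η : Fin k → (Fin m → ℝ) → ((Fin m → ℝ) →L[ℝ] ℝ))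
    (hη : ∀ α, ContDiffOn ℝ (⊤ : ℕ∞) (η α) U)
    (R : Fin k → (Fin m → ℝ) → (Fin m → ℝ))
    (hRs : ∀ α, ContDiffOn ℝ (⊤ : ℕ∞) (R α) U)
    (hReeb : ∀ x ∈ U, ∀ α β : Fin k,
      η β x (R α x) = (if α = β then (1 : ℝ) else 0) ∧
      ∀ v, extD (η β) x (R α x) v = 0)
    (X₁ X₂ : (Fin m → ℝ) → (Fin m → ℝ))
    (hX₁ : ContDiffOn ℝ (⊤ : ℕ∞) X₁ U) (hX₂ : ContDiffOn ℝ (⊤ : ℕ∞) X₂ U)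
    (h₁ h₂ : Fin k → (Fin m → ℝ) → ℝ)
    (hh₁s : ∀ α, ContDiffOn ℝ (⊤ : ℕ∞) (h₁ α) U)
    (hh₂s : ∀ α, ContDiffOn ℝ (⊤ : ℕ∞) (h₂ α) U)
    (hHam₁ : ∀ x ∈ U, ∀ α : Fin k,
      η α x (X₁ x) = -(h₁ α x) ∧
      ∀ v, extD (η α) x (X₁ x) v =
        fderiv ℝ (h₁ α) x v - ∑ β, fderiv ℝ (h₁ α) x (R β x) * η β x v)
    (hHam₂ : ∀ x ∈ U, ∀ α : Fin k,
      η α x (X₂ x) = -(h₂ α x) ∧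
      ∀ v, extD (η α) x (X₂ x) v =
        fderiv ℝ (h₂ α) x v - ∑ β, fderiv ℝ (h₂ α) x (R β x) * η β x v) :
    ∀ α : Fin k, ∀ x ∈ U,
      η α x (lieBr X₁ X₂ x) =
        -(fderiv ℝ (h₂ α) x (X₁ x)) - ∑ β, h₂ β x * fderiv ℝ (h₁ α) x (R β x) := by
  intro α x hx
  have key : ∀ (X : (Fin m → ℝ) → (Fin m → ℝ)) (h : (Fin m → ℝ) → ℝ),
      ContDiffOn ℝ (⊤ : ℕ∞) X U → (∀ y ∈ U, η α y (X y) = -(h y)) →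
      ∀ v, fderiv ℝ (η α) x v (X x) + η α x (fderiv ℝ X x v) = -(fderiv ℝ h x v) := by
    intro X h hX hh v
    have d1 : DifferentiableAt ℝ (η α) x :=
      ((hη α).contDiffAt (hU.mem_nhds hx)).differentiableAt (by simp)
    have d2 : DifferentiableAt ℝ X x :=
      (hX.contDiffAt (hU.mem_nhds hx)).differentiableAt (by simp)
    have e : (fun y => η α y (X y)) =ᶠ[nhds x] fun y => -(h y) := by
      filter_upwards [hU.mem_nhds hx] with y hy using hh y hy
    have e2 := e.fderiv_eq (𝕜 := ℝ)
    rw [fderiv_clm_apply d1 d2, fderiv_fun_neg] at e2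
    have e3 := congrArg (fun L => L v) e2
    simp at e3
    linarith
  have k1 := key X₁ (h₁ α) hX₁ (fun y hy => (hHam₁ y hy α).1) (X₂ x)
  have k2 := key X₂ (h₂ α) hX₂ (fun y hy => (hHam₂ y hy α).1) (X₁ x)
  have k3 := (hHam₁ x hx α).2 (X₂ x)
  have k4 : ∑ β, fderiv ℝ (h₁ α) x (R β x) * η β x (X₂ x)
      = -∑ β, h₂ β x * fderiv ℝ (h₁ α) x (R β x) := by
    rw [← Finset.sum_neg_distrib]
    refine Finset.sum_congr rfl fun β _ => ?_
    rw [(hHam₂ x hx β).1]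
    ring
  rw [k4] at k3
  simp only [extD] at k3
  simp only [lieBr, map_sub]
  linarith
end

section
/- Let η = (η^1, …, η^k) be a smooth ℝ^k-valued differential one-form on an open set U ⊆ ℝ^m with Reeb vector fields R_1, …, R_k, and let X_1, X_2 be η-Hamiltonian vector fields with η-Hamiltonian k-functions h_1 and h_2. If moreover R_βh_1^α = 0 and R_βh_2^α = 0 on U for all α, β ∈ {1,…,k}, then for each α and all x ∈ U: η^α_x([X_1, X_2](x)) = dη^α_x(X_1(x), X_2(x)). (This relates the k-contact bracket of first integrals of the Reeb vector fields to the presymplectic forms dη^α.) -/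
theorem deriv_pairing_aux {m : ℕ} {U : Set (Fin m → ℝ)} (hU : IsOpen U)
    {θ : (Fin m → ℝ) → ((Fin m → ℝ) →L[ℝ] ℝ)} {X : (Fin m → ℝ) → (Fin m → ℝ)}
    {h : (Fin m → ℝ) → ℝ}
    (hθ : ContDiffOn ℝ (⊤ : ℕ∞) θ U) (hX : ContDiffOn ℝ (⊤ : ℕ∞) X U)
    (he : ∀ x ∈ U, θ x (X x) = -(h x)) {x : Fin m → ℝ} (hx : x ∈ U) (v : Fin m → ℝ) :
    fderiv ℝ θ x v (X x) + θ x (fderiv ℝ X x v) = -(fderiv ℝ h x v) := by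
  have hn : U ∈ nhds x := hU.mem_nhds hx
  have d1 : DifferentiableAt ℝ θ x := (hθ.contDiffAt hn).differentiableAt (by simp)
  have d2 : DifferentiableAt ℝ X x := (hX.contDiffAt hn).differentiableAt (by simp)
  have e : (fun y => θ y (X y)) =ᶠ[nhds x] (fun y => -(h y)) := by
    filter_upwards [hn] with y hy using he y hy
  have e2 := e.fderiv_eq (𝕜 := ℝ)
  rw [fderiv_clm_apply d1 d2, fderiv_fun_neg] at e2
  have e3 := congrArg (fun L => L v) e2
  simp at e3
  linarith

/-- **`{h_1, h_2}_η = dη(X_1, X_2)` for first integrals of the Reeb vector fields.**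
If `X_1, X_2` are `η`-Hamiltonian vector fields with `η`-Hamiltonian k-functions
`h_1, h_2` relative to a smooth `ℝ^k`-valued one-form `η` on an open `U ⊆ ℝ^m` with
Reeb vector fields `R_1, …, R_k`, and `R_βh_1^α = R_βh_2^α = 0` on `U` for all
`α, β`, then `η^α([X_1, X_2])(x) = dη^α(X_1, X_2)(x)` for each `α` and `x ∈ U`. -/
theorem stmt_9 (m k : ℕ) (U : Set (Fin m → ℝ)) (hU : IsOpen U)
    (η : Fin k → (Fin m → ℝ) → ((Fin m → ℝ) →L[ℝ] ℝ))
    (hη : ∀ α, ContDiffOn ℝ (⊤ : ℕ∞) (η α) U)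
    (R : Fin k → (Fin m → ℝ) → (Fin m → ℝ))
    (hRs : ∀ α, ContDiffOn ℝ (⊤ : ℕ∞) (R α) U)
    (hReeb : ∀ x ∈ U, ∀ α β : Fin k,
      η β x (R α x) = (if α = β then (1 : ℝ) else 0) ∧
      ∀ v, extD (η β) x (R α x) v = 0)
    (X₁ X₂ : (Fin m → ℝ) → (Fin m → ℝ))
    (hX₁ : ContDiffOn ℝ (⊤ : ℕ∞) X₁ U) (hX₂ : ContDiffOn ℝ (⊤ : ℕ∞) X₂ U)
    (h₁ h₂ : Fin k → (Fin m → ℝ) → ℝ)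
    (hh₁s : ∀ α, ContDiffOn ℝ (⊤ : ℕ∞) (h₁ α) U)
    (hh₂s : ∀ α, ContDiffOn ℝ (⊤ : ℕ∞) (h₂ α) U)
    (hHam₁ : ∀ x ∈ U, ∀ α : Fin k,
      η α x (X₁ x) = -(h₁ α x) ∧
      ∀ v, extD (η α) x (X₁ x) v =
        fderiv ℝ (h₁ α) x v - ∑ β, fderiv ℝ (h₁ α) x (R β x) * η β x v)
    (hHam₂ : ∀ x ∈ U, ∀ α : Fin k,
      η α x (X₂ x) = -(h₂ α x) ∧
      ∀ v, extD (η α) x (X₂ x) v =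
        fderiv ℝ (h₂ α) x v - ∑ β, fderiv ℝ (h₂ α) x (R β x) * η β x v)
    (hFI₁ : ∀ x ∈ U, ∀ α β : Fin k, fderiv ℝ (h₁ α) x (R β x) = 0)
    (hFI₂ : ∀ x ∈ U, ∀ α β : Fin k, fderiv ℝ (h₂ α) x (R β x) = 0) :
    ∀ α : Fin k, ∀ x ∈ U,
      η α x (lieBr X₁ X₂ x) = extD (η α) x (X₁ x) (X₂ x) := by
  intro α x hx
  have a1 := deriv_pairing_aux hU (hη α) hX₁ (fun y hy => (hHam₁ y hy α).1) hx (X₂ x)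
  have a2 := deriv_pairing_aux hU (hη α) hX₂ (fun y hy => (hHam₂ y hy α).1) hx (X₁ x)
  have b1 := (hHam₁ x hx α).2 (X₂ x)
  have b2 := (hHam₂ x hx α).2 (X₁ x)
  simp only [hFI₁ x hx, hFI₂ x hx, zero_mul, Finset.sum_const_zero, sub_zero, extD] at b1 b2
  simp only [lieBr, extD, map_sub]
  linarith
end

section
/- Let η = (η^1, …, η^k) be a smooth ℝ^k-valued differential one-form on an open set U ⊆ ℝ^m with Reeb vector fields R_1, …, R_k, and let X_h, X_f be η-Hamiltonian vector fields with η-Hamiltonian k-functions h = (h^1,…,h^k) and f = (f^1,…,f^k). Then η^α([X_h, X_f]) = 0 on U for all α if and only if X_hf^α = −Σ_{β=1}^k f^β·(R_βh^α) on U for all α, i.e. the k-contact bracket {h, f}_η vanishes exactly when f is a dissipated k-contact k-function for (U, η, h): X_h f = −R_f h. -/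
/-- Differentiating `θ(X) = -g` on an open set. -/
theorem contraction_deriv_aux {E : Type*} [NormedAddCommGroup E] [NormedSpace ℝ E]
    (U : Set E) (hU : IsOpen U) (θ : E → (E →L[ℝ] ℝ)) (X : E → E) (g : E → ℝ)
    (hθ : ContDiffOn ℝ (⊤ : ℕ∞) θ U) (hX : ContDiffOn ℝ (⊤ : ℕ∞) X U)
    (hg : ∀ x ∈ U, θ x (X x) = -(g x)) (x : E) (hx : x ∈ U) (v : E) :
    fderiv ℝ θ x v (X x) + θ x (fderiv ℝ X x v) = -(fderiv ℝ g x v) := by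
  have hn : U ∈ nhds x := hU.mem_nhds hx
  have dθ : DifferentiableAt ℝ θ x := (hθ.contDiffAt hn).differentiableAt (by simp)
  have dX : DifferentiableAt ℝ X x := (hX.contDiffAt hn).differentiableAt (by simp)
  have e : (fun y => θ y (X y)) =ᶠ[nhds x] fun y => -(g y) :=
    Filter.eventually_of_mem hn hg
  have h1 := e.fderiv_eq (𝕜 := ℝ)
  rw [fderiv_clm_apply dθ dX, fderiv_fun_neg] at h1
  have h2 := congrArg (fun L : E →L[ℝ] ℝ => L v) h1
  simp at h2
  linarith

/-- **Dissipated quantities are those that η-commute with the Hamiltonian.** Let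
`X_h, X_f` be `η`-Hamiltonian vector fields with `η`-Hamiltonian k-functions
`h, f` relative to a smooth `ℝ^k`-valued one-form `η` on an open `U ⊆ ℝ^m` with
Reeb vector fields `R_1, …, R_k`. Then `η^α([X_h, X_f]) = 0` on `U` for all `α`
if and only if `X_hf^α = −Σ_β f^β·(R_βh^α)` on `U` for all `α`, i.e. `f` is a
dissipated k-contact k-function for `(U, η, h)`: `X_hf = −R_fh`. -/
theorem stmt_10 (m k : ℕ) (U : Set (Fin m → ℝ)) (hU : IsOpen U)
    (η : Fin k → (Fin m → ℝ) → ((Fin m → ℝ) →L[ℝ] ℝ))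
    (hη : ∀ α, ContDiffOn ℝ (⊤ : ℕ∞) (η α) U)
    (R : Fin k → (Fin m → ℝ) → (Fin m → ℝ))
    (hRs : ∀ α, ContDiffOn ℝ (⊤ : ℕ∞) (R α) U)
    (hReeb : ∀ x ∈ U, ∀ α β : Fin k,
      η β x (R α x) = (if α = β then (1 : ℝ) else 0) ∧
      ∀ v, extD (η β) x (R α x) v = 0)
    (Xh Xf : (Fin m → ℝ) → (Fin m → ℝ))
    (hXh : ContDiffOn ℝ (⊤ : ℕ∞) Xh U) (hXf : ContDiffOn ℝ (⊤ : ℕ∞) Xf U)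
    (h f : Fin k → (Fin m → ℝ) → ℝ)
    (hhs : ∀ α, ContDiffOn ℝ (⊤ : ℕ∞) (h α) U)
    (hfs : ∀ α, ContDiffOn ℝ (⊤ : ℕ∞) (f α) U)
    (hHamh : ∀ x ∈ U, ∀ α : Fin k,
      η α x (Xh x) = -(h α x) ∧
      ∀ v, extD (η α) x (Xh x) v =
        fderiv ℝ (h α) x v - ∑ β, fderiv ℝ (h α) x (R β x) * η β x v)
    (hHamf : ∀ x ∈ U, ∀ α : Fin k,
      η α x (Xf x) = -(f α x) ∧
      ∀ v, extD (η α) x (Xf x) v =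
        fderiv ℝ (f α) x v - ∑ β, fderiv ℝ (f α) x (R β x) * η β x v) :
    (∀ x ∈ U, ∀ α : Fin k, η α x (lieBr Xh Xf x) = 0) ↔
      (∀ x ∈ U, ∀ α : Fin k,
        fderiv ℝ (f α) x (Xh x) = -∑ β, f β x * fderiv ℝ (h α) x (R β x)) := by
  have key : ∀ x ∈ U, ∀ α : Fin k, η α x (lieBr Xh Xf x) =
      -(fderiv ℝ (f α) x (Xh x)) - ∑ β, f β x * fderiv ℝ (h α) x (R β x) := by
    intro x hx α
    have h1 := contraction_deriv_aux U hU (η α) Xf (f α) (hη α) hXf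
      (fun y hy => (hHamf y hy α).1) x hx (Xh x)
    have h2 := contraction_deriv_aux U hU (η α) Xh (h α) (hη α) hXh
      (fun y hy => (hHamh y hy α).1) x hx (Xf x)
    have h3 := (hHamh x hx α).2 (Xf x)
    have h4 : ∑ β, fderiv ℝ (h α) x (R β x) * η β x (Xf x) =
        -∑ β, f β x * fderiv ℝ (h α) x (R β x) := by
      rw [← Finset.sum_neg_distrib]
      refine Finset.sum_congr rfl fun β _ => ?_
      rw [(hHamf x hx β).1]
      ring
    rw [h4] at h3
    simp only [extD] at h3
    simp only [lieBr, map_sub]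
    linarith
  constructor
  · intro H x hx α
    have := key x hx α
    rw [H x hx α] at this
    linarith
  · intro H x hx α
    rw [key x hx α, H x hx α]
    ring
end

section
/- Let η = (η^1, …, η^k) be a smooth ℝ^k-valued differential one-form on an open set U ⊆ ℝ^m with Reeb vector fields R_1, …, R_k, and let X be an η-Hamiltonian vector field with η-Hamiltonian k-function h = (h^1, …, h^k). On W := ℝ^k × U with points (z, x) = (z^1,…,z^k, x), consider the smooth one-form θ on W defined by θ_{(z,x)}(w, v) := Σ_{α=1}^k z^α · η^α_x(v) for (w, v) ∈ ℝ^k × ℝ^m, its exterior derivative ω := dθ (a closed two-form on W), and the vector field Z on W given by Z(z, x) := ((Σ_{α=1}^k z^α·(R_βh^α)(x))_{β=1,…,k}, X(x)). Then ι_Zω = dF, where F(z, x) := Σ_{α=1}^k z^α h^α(x); in particular Z is a Hamiltonian vector field of the presymplectic (closed) two-form ω. (This is the computational content of the proposition that every k-contact Hamiltonian system on M gives rise to a presymplectic Hamiltonian system on ℝ^k × M.) -/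
/-- Product rule for `(z, x) ↦ Σ_α z^α g^α(x)`. -/
theorem aux_fderiv_sum {m k : ℕ} (g : Fin k → (Fin m → ℝ) → ℝ)
    (G : ((Fin k → ℝ) × (Fin m → ℝ)) → ℝ) (hG : ∀ z x, G (z, x) = ∑ α, z α * g α x)
    (z : Fin k → ℝ) (x : Fin m → ℝ) (hg : ∀ α, DifferentiableAt ℝ (g α) x)
    (a : Fin k → ℝ) (b : Fin m → ℝ) :
    fderiv ℝ G (z, x) (a, b) = ∑ α, (a α * g α x + z α * fderiv ℝ (g α) x b) := by
  have hGe : G = fun q => ∑ α, q.1 α * g α q.2 := by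
    funext q
    exact hG q.1 q.2
  have key : ∀ α : Fin k, HasFDerivAt
      (fun q : (Fin k → ℝ) × (Fin m → ℝ) => q.1 α * g α q.2)
      (z α • (fderiv ℝ (g α) x).comp (ContinuousLinearMap.snd ℝ (Fin k → ℝ) (Fin m → ℝ)) +
        g α x • (ContinuousLinearMap.proj (R := ℝ) (φ := fun _ : Fin k => ℝ) α).comp
          (ContinuousLinearMap.fst ℝ (Fin k → ℝ) (Fin m → ℝ))) (z, x) := by
    intro α
    have h1 : HasFDerivAt (fun q : (Fin k → ℝ) × (Fin m → ℝ) => q.1 α)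
        ((ContinuousLinearMap.proj (R := ℝ) (φ := fun _ : Fin k => ℝ) α).comp
          (ContinuousLinearMap.fst ℝ (Fin k → ℝ) (Fin m → ℝ))) (z, x) :=
      ((ContinuousLinearMap.proj (R := ℝ) (φ := fun _ : Fin k => ℝ) α).comp
          (ContinuousLinearMap.fst ℝ (Fin k → ℝ) (Fin m → ℝ))).hasFDerivAt
    have h2 : HasFDerivAt (fun q : (Fin k → ℝ) × (Fin m → ℝ) => g α q.2)
        ((fderiv ℝ (g α) x).comp (ContinuousLinearMap.snd ℝ (Fin k → ℝ) (Fin m → ℝ))) (z, x) :=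
      HasFDerivAt.comp (z, x) (hg α).hasFDerivAt hasFDerivAt_snd
    exact h1.mul h2
  rw [hGe, (HasFDerivAt.fun_sum (fun α _ => key α)).fderiv]
  simp only [ContinuousLinearMap.sum_apply, ContinuousLinearMap.add_apply,
    ContinuousLinearMap.smul_apply, ContinuousLinearMap.comp_apply,
    ContinuousLinearMap.coe_fst', ContinuousLinearMap.coe_snd',
    ContinuousLinearMap.proj_apply, smul_eq_mul]
  exact Finset.sum_congr rfl fun α _ => by ring

/-- Derivative of a one-form evaluated on a constant vector. -/
theorem aux_fderiv_apply {E : Type*} [NormedAddCommGroup E] [NormedSpace ℝ E]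
    (θ : E → (E →L[ℝ] ℝ)) (q u v : E) (hd : DifferentiableAt ℝ θ q) :
    fderiv ℝ θ q u v = fderiv ℝ (fun y => θ y v) q u := by
  have h1 := hd.hasFDerivAt.clm_apply (hasFDerivAt_const v q)
  rw [h1.fderiv]
  simp

/-- **Presymplectification of a k-contact Hamiltonian vector field.** Let `X` be an
`η`-Hamiltonian vector field with `η`-Hamiltonian k-function `h` relative to a
smooth `ℝ^k`-valued one-form `η` on an open `U ⊆ ℝ^m` with Reeb vector fields
`R_1, …, R_k`. On `W = ℝ^k × U` consider the one-form
`θ_{(z,x)}(w,v) = Σ_α z^α η^α_x(v)`, its exterior derivative `ω = dθ`, the vector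
field `Z(z,x) = ((Σ_α z^α (R_βh^α)(x))_β, X(x))` and the function
`F(z,x) = Σ_α z^α h^α(x)`. Then `ι_Zω = dF` on `W`, so `Z` is a Hamiltonian
vector field of the presymplectic form `ω`. -/
theorem stmt_12 (m k : ℕ) (U : Set (Fin m → ℝ)) (hU : IsOpen U)
    (η : Fin k → (Fin m → ℝ) → ((Fin m → ℝ) →L[ℝ] ℝ))
    (hη : ∀ α, ContDiffOn ℝ (⊤ : ℕ∞) (η α) U)
    (R : Fin k → (Fin m → ℝ) → (Fin m → ℝ))
    (hRs : ∀ α, ContDiffOn ℝ (⊤ : ℕ∞) (R α) U)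
    (hReeb : ∀ x ∈ U, ∀ α β : Fin k,
      η β x (R α x) = (if α = β then (1 : ℝ) else 0) ∧
      ∀ v, extD (η β) x (R α x) v = 0)
    (X : (Fin m → ℝ) → (Fin m → ℝ)) (hX : ContDiffOn ℝ (⊤ : ℕ∞) X U)
    (h : Fin k → (Fin m → ℝ) → ℝ)
    (hhs : ∀ α, ContDiffOn ℝ (⊤ : ℕ∞) (h α) U)
    (hHam : ∀ x ∈ U, ∀ α : Fin k,
      η α x (X x) = -(h α x) ∧
      ∀ v, extD (η α) x (X x) v =
        fderiv ℝ (h α) x v - ∑ β, fderiv ℝ (h α) x (R β x) * η β x v)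
    (θ : ((Fin k → ℝ) × (Fin m → ℝ)) → (((Fin k → ℝ) × (Fin m → ℝ)) →L[ℝ] ℝ))
    (hθ : ∀ (z : Fin k → ℝ) (x : Fin m → ℝ) (w : Fin k → ℝ) (v : Fin m → ℝ),
      θ (z, x) (w, v) = ∑ α, z α * η α x v)
    (hθs : ContDiffOn ℝ (⊤ : ℕ∞) θ ((Set.univ : Set (Fin k → ℝ)) ×ˢ U))
    (Z : ((Fin k → ℝ) × (Fin m → ℝ)) → ((Fin k → ℝ) × (Fin m → ℝ)))
    (hZ : ∀ (z : Fin k → ℝ) (x : Fin m → ℝ),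
      Z (z, x) = ((fun β => ∑ α, z α * fderiv ℝ (h α) x (R β x)), X x))
    (F : ((Fin k → ℝ) × (Fin m → ℝ)) → ℝ)
    (hF : ∀ (z : Fin k → ℝ) (x : Fin m → ℝ), F (z, x) = ∑ α, z α * h α x) :
    ∀ (z : Fin k → ℝ), ∀ x ∈ U, ∀ p : (Fin k → ℝ) × (Fin m → ℝ),
      extD θ (z, x) (Z (z, x)) p = fderiv ℝ F (z, x) p := by
  intro z x hx p
  obtain ⟨w, v⟩ := p
  have hUn : U ∈ nhds x := hU.mem_nhds hx
  have dη : ∀ α, DifferentiableAt ℝ (η α) x := fun α =>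
    ((hη α).contDiffAt hUn).differentiableAt (by simp)
  have dh : ∀ α, DifferentiableAt ℝ (h α) x := fun α =>
    ((hhs α).contDiffAt hUn).differentiableAt (by simp)
  have dθ : DifferentiableAt ℝ θ (z, x) :=
    (hθs.contDiffAt ((isOpen_univ.prod hU).mem_nhds ⟨Set.mem_univ _, hx⟩)).differentiableAt
      (by simp)
  have D : ∀ a b c e, fderiv ℝ θ (z, x) (a, b) (c, e)
      = ∑ α, (a α * η α x e + z α * fderiv ℝ (η α) x b e) := by
    intro a b c e
    rw [aux_fderiv_apply θ _ _ _ dθ,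
      aux_fderiv_sum (fun α y => η α y e) _ (fun z x => hθ z x c e) z x
        (fun α => (dη α).clm_apply (differentiableAt_const e)) a b]
    exact Finset.sum_congr rfl fun α _ => by rw [aux_fderiv_apply (η α) _ _ _ (dη α)]
  rw [aux_fderiv_sum h F hF z x dh w v, hZ, extD, D, D, ← Finset.sum_sub_distrib]
  have e1 : ∀ α, z α * fderiv ℝ (η α) x (X x) v - z α * fderiv ℝ (η α) x v (X x)
      = z α * fderiv ℝ (h α) x v
        - ∑ β, z α * fderiv ℝ (h α) x (R β x) * η β x v := by
    intro α
    have := (hHam x hx α).2 v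
    rw [extD] at this
    rw [← mul_sub, this, mul_sub, Finset.mul_sum]
    simp only [mul_assoc]
  have e2 : ∑ β, (∑ α, z α * fderiv ℝ (h α) x (R β x)) * η β x v
      = ∑ α, ∑ β, z α * fderiv ℝ (h α) x (R β x) * η β x v := by
    simp only [Finset.sum_mul]
    exact Finset.sum_comm
  rw [← sub_eq_zero, ← Finset.sum_sub_distrib]
  rw [← sub_eq_zero, ← Finset.sum_sub_distrib] at e2
  rw [← e2]
  refine Finset.sum_congr rfl fun α _ => ?_
  rw [(hHam x hx α).1]
  linear_combination e1 α
end

section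
/- Let c_{βε}^γ (β, ε, γ ∈ {1,…,r}) be real constants, let α_1, …, α_r be smooth vector fields on ℝ^n with [α_β, α_ε] = Σ_{γ=1}^r c_{βε}^γ α_γ for all β, ε, and let Υ^β_i : ℝ^m → ℝ (β ∈ {1,…,r}, i ∈ {1,…,m}) be smooth functions satisfying the Maurer–Cartan-type condition ∂Υ^γ_j/∂q^i − ∂Υ^γ_i/∂q^j + Σ_{β,ε=1}^r c_{βε}^γ Υ^β_i Υ^ε_j = 0 on ℝ^m for all i, j, γ. Define vector fields Z_1, …, Z_m on ℝ^m × ℝ^n by Z_i(q, y) := (e_i, Σ_{β=1}^r Υ^β_i(q)·α_β(y)), where e_i is the i-th standard basis vector of ℝ^m. Then [Z_i, Z_j] = 0 on ℝ^m × ℝ^n for all i, j ∈ {1,…,m}. (This is the integrability of the system of PDEs associated with a g-structure, making it a PDE Lie system.) -/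
/-- **Integrability of the PDE system associated with a g-structure.** Let
`αv_1, …, αv_r` be smooth vector fields on `ℝ^n` with
`[αv_β, αv_ε] = Σ_γ c_{βε}^γ αv_γ`, and let `Υ^β_i : ℝ^m → ℝ` be smooth functions
satisfying the Maurer–Cartan-type condition
`∂Υ^γ_j/∂q^i − ∂Υ^γ_i/∂q^j + Σ_{β,ε} c_{βε}^γ Υ^β_i Υ^ε_j = 0`. Then the vector
fields `Z_i(q, y) = (e_i, Σ_β Υ^β_i(q)·αv_β(y))` on `ℝ^m × ℝ^n` pairwise commute:
`[Z_i, Z_j] = 0`. -/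
theorem stmt_14 (m n r : ℕ)
    (c : Fin r → Fin r → Fin r → ℝ)
    (αv : Fin r → (Fin n → ℝ) → (Fin n → ℝ))
    (hαs : ∀ β, ContDiff ℝ (⊤ : ℕ∞) (αv β))
    (hbr : ∀ β ε : Fin r, ∀ y : Fin n → ℝ,
      lieBr (αv β) (αv ε) y = ∑ γ, c β ε γ • αv γ y)
    (Υ : Fin r → Fin m → (Fin m → ℝ) → ℝ)
    (hΥs : ∀ β i, ContDiff ℝ (⊤ : ℕ∞) (Υ β i))
    (hMC : ∀ γ : Fin r, ∀ i j : Fin m, ∀ q : Fin m → ℝ,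
      fderiv ℝ (Υ γ j) q (Pi.single i 1) - fderiv ℝ (Υ γ i) q (Pi.single j 1) +
        ∑ β, ∑ ε, c β ε γ * (Υ β i q * Υ ε j q) = 0)
    (Z : Fin m → ((Fin m → ℝ) × (Fin n → ℝ)) → ((Fin m → ℝ) × (Fin n → ℝ)))
    (hZ : ∀ (i : Fin m) (q : Fin m → ℝ) (y : Fin n → ℝ),
      Z i (q, y) = (Pi.single i (1 : ℝ), ∑ β, Υ β i q • αv β y)) :
    ∀ i j : Fin m, ∀ p : (Fin m → ℝ) × (Fin n → ℝ),
      lieBr (Z i) (Z j) p = 0 := by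
  have hfd : ∀ (i : Fin m) (q : Fin m → ℝ) (y : Fin n → ℝ) (u : Fin m → ℝ) (v : Fin n → ℝ),
      fderiv ℝ (Z i) (q, y) (u, v) =
        (0, ∑ β, (Υ β i q • fderiv ℝ (αv β) y v + fderiv ℝ (Υ β i) q u • αv β y)) := by
    intro i q y u v
    have hZ' : Z i = fun p => (Pi.single i (1 : ℝ), ∑ β, Υ β i p.1 • αv β p.2) := by
      funext p
      exact hZ i p.1 p.2
    have hU : ∀ β, HasFDerivAt (fun p : (Fin m → ℝ) × (Fin n → ℝ) => Υ β i p.1)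
        ((fderiv ℝ (Υ β i) q).comp (ContinuousLinearMap.fst ℝ (Fin m → ℝ) (Fin n → ℝ)))
        (q, y) := fun β =>
      HasFDerivAt.comp (q, y) (g := Υ β i) (f := Prod.fst)
        ((hΥs β i).differentiable (by simp) q).hasFDerivAt hasFDerivAt_fst
    have hA : ∀ β, HasFDerivAt (fun p : (Fin m → ℝ) × (Fin n → ℝ) => αv β p.2)
        ((fderiv ℝ (αv β) y).comp (ContinuousLinearMap.snd ℝ (Fin m → ℝ) (Fin n → ℝ)))
        (q, y) := fun β =>
      HasFDerivAt.comp (q, y) (g := αv β) (f := Prod.snd)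
        ((hαs β).differentiable (by simp) y).hasFDerivAt hasFDerivAt_snd
    have hS := HasFDerivAt.fun_sum (u := Finset.univ) (fun β _ => (hU β).smul (hA β))
    have hT := (hasFDerivAt_const (𝕜 := ℝ) (Pi.single i (1 : ℝ) : Fin m → ℝ) (q, y)).prodMk hS
    rw [hZ']
    have := hT.fderiv
    simp only [Pi.smul_apply', Pi.smul_def'] at this
    rw [this]
    simp [ContinuousLinearMap.sum_apply]
  rintro i j ⟨q, y⟩
  simp only [lieBr]
  rw [hZ i q y, hZ j q y, hfd, hfd]
  refine Prod.ext (by simp) ?_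
  simp only [Prod.snd_sub, Prod.snd_zero, map_sum, map_smul, Finset.sum_add_distrib,
    Finset.smul_sum]
  have h1 : ∑ β, ∑ ε, (Υ β i q * Υ ε j q) • lieBr (αv β) (αv ε) y =
      ∑ γ, (∑ β, ∑ ε, c β ε γ * (Υ β i q * Υ ε j q)) • αv γ y := by
    simp only [hbr, Finset.smul_sum, Finset.sum_smul, smul_smul]
    rw [Finset.sum_comm' (t' := Finset.univ) (s' := fun _ => Finset.univ) (by simp)]
    rw [Finset.sum_comm]
    have : ∀ β : Fin r, ∑ ε, ∑ γ, (Υ β i q * Υ ε j q * c β ε γ) • αv γ y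
        = ∑ γ, ∑ ε, (c β ε γ * (Υ β i q * Υ ε j q)) • αv γ y := by
      intro β
      rw [Finset.sum_comm]
      simp only [mul_comm]
    rw [Finset.sum_congr rfl (fun β _ => this β), Finset.sum_comm]
  have h2 : ∑ γ, (fderiv ℝ (Υ γ j) q (Pi.single i 1) - fderiv ℝ (Υ γ i) q (Pi.single j 1) +
        ∑ β, ∑ ε, c β ε γ * (Υ β i q * Υ ε j q)) • αv γ y = 0 := by
    simp only [hMC, zero_smul, Finset.sum_const_zero]
  simp only [add_smul, sub_smul, Finset.sum_add_distrib, Finset.sum_sub_distrib] at h2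
  rw [← h1] at h2
  simp only [lieBr, smul_sub, Finset.sum_sub_distrib] at h2
  have h3 : ∑ ε, ∑ β, Υ ε j q • Υ β i q • fderiv ℝ (αv ε) y (αv β y) =
      ∑ β, ∑ ε, (Υ β i q * Υ ε j q) • fderiv ℝ (αv ε) y (αv β y) := by
    rw [Finset.sum_comm]
    simp only [smul_smul, mul_comm]
  rw [h3]
  simp only [smul_smul]
  rw [← h2]
  abel
end

section
/- On ℝ^4 with coordinates (x_1, x_2, x_3, x_4), consider the ℝ²-valued one-form η_fw = η^1 ⊗ e_1 + η^2 ⊗ e_2 with η^1 = x_1 dx_2 − dx_3 and η^2 = −(x_1²/2) dx_2 + dx_4. Then η_fw is a two-contact form on ℝ^4: for every x ∈ ℝ^4, (a) ker(η_fw)_x := {v ∈ ℝ^4 : η^1_x(v) = η^2_x(v) = 0} is two-dimensional, spanned by (1,0,0,0) and (0,1,x_1,x_1²/2); (b) the joint kernel {v ∈ ℝ^4 : dη^1_x(v,·) = 0 and dη^2_x(v,·) = 0} equals span{(0,0,1,0),(0,0,0,1)}; (c) ker(η_fw)_x ∩ ker(dη_fw)_x = 0. (This is the two-contact form compatible with the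 Lie system of the front-wheel driven kinematic car.) -/
/-- `η^1 = x_1 dx_2 − dx_3` on `ℝ^4` (coordinates `x_1, x_2, x_3, x_4 = x 0, …, x 3`). -/
noncomputable def etaFW1 : (Fin 4 → ℝ) → ((Fin 4 → ℝ) →L[ℝ] ℝ) :=
  fun x => x 0 • (ContinuousLinearMap.proj 1 : (Fin 4 → ℝ) →L[ℝ] ℝ) -
    (ContinuousLinearMap.proj 2 : (Fin 4 → ℝ) →L[ℝ] ℝ)

/-- `η^2 = −(x_1²/2) dx_2 + dx_4` on `ℝ^4`. -/
noncomputable def etaFW2 : (Fin 4 → ℝ) → ((Fin 4 → ℝ) →L[ℝ] ℝ) :=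
  fun x => (-(x 0 ^ 2 / 2)) • (ContinuousLinearMap.proj 1 : (Fin 4 → ℝ) →L[ℝ] ℝ) +
    (ContinuousLinearMap.proj 3 : (Fin 4 → ℝ) →L[ℝ] ℝ)

theorem extD_smul_proj (f : (Fin 4 → ℝ) → ℝ) (f' : (Fin 4 → ℝ) →L[ℝ] ℝ)
    (c : (Fin 4 → ℝ) →L[ℝ] ℝ) (x v u : Fin 4 → ℝ) (hf : HasFDerivAt f f' x) :
    extD (fun x => f x • (ContinuousLinearMap.proj 1 : (Fin 4 → ℝ) →L[ℝ] ℝ) + c) x v u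
      = f' v * u 1 - f' u * v 1 := by
  have h := (hf.smul_const (ContinuousLinearMap.proj 1 : (Fin 4 → ℝ) →L[ℝ] ℝ)).add_const c
  unfold extD
  rw [h.fderiv]
  simp

theorem hasFDerivAt_coord (x : Fin 4 → ℝ) :
    HasFDerivAt (fun x : Fin 4 → ℝ => x 0)
      (ContinuousLinearMap.proj 0 : (Fin 4 → ℝ) →L[ℝ] ℝ) x :=
  (ContinuousLinearMap.proj 0 : (Fin 4 → ℝ) →L[ℝ] ℝ).hasFDerivAt

theorem extD_etaFW1 (x v u : Fin 4 → ℝ) :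
    extD etaFW1 x v u = v 0 * u 1 - u 0 * v 1 := by
  have h := extD_smul_proj _ _ (-(ContinuousLinearMap.proj 2 : (Fin 4 → ℝ) →L[ℝ] ℝ)) x v u
    (hasFDerivAt_coord x)
  simp only [← sub_eq_add_neg] at h
  exact h

theorem extD_etaFW2 (x v u : Fin 4 → ℝ) :
    extD etaFW2 x v u = -x 0 * (v 0 * u 1 - u 0 * v 1) := by
  have h0 : HasFDerivAt (fun x : Fin 4 → ℝ => -(x 0 ^ 2 / 2))
      ((-x 0) • (ContinuousLinearMap.proj 0 : (Fin 4 → ℝ) →L[ℝ] ℝ)) x := by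
    have h1 : HasDerivAt (fun t : ℝ => -(t ^ 2 / 2)) (-x 0) (x 0) := by
      have h2 := (((hasDerivAt_id (x 0)).pow 2).div_const 2).neg
      refine h2.congr_deriv ?_
      simp
    have h3 := HasDerivAt.comp_hasFDerivAt (f := fun x : Fin 4 → ℝ => x 0) x h1
      (hasFDerivAt_coord x)
    exact h3
  have h := extD_smul_proj _ _ (ContinuousLinearMap.proj 3 : (Fin 4 → ℝ) →L[ℝ] ℝ) x v u h0
  refine Eq.trans h ?_
  simp
  ring

theorem ker_extD_etaFW1 (x v : Fin 4 → ℝ) (h : ∀ u, extD etaFW1 x v u = 0) :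
    v 0 = 0 ∧ v 1 = 0 := by
  have h1 := h ![0, 1, 0, 0]
  have h2 := h ![1, 0, 0, 0]
  rw [extD_etaFW1] at h1 h2
  simp at h1 h2
  exact ⟨h1, h2⟩

theorem etaFW1_apply (x v : Fin 4 → ℝ) : etaFW1 x v = x 0 * v 1 - v 2 := by
  simp [etaFW1]

theorem etaFW2_apply (x v : Fin 4 → ℝ) : etaFW2 x v = -(x 0 ^ 2 / 2) * v 1 + v 3 := by
  simp [etaFW2]

/-- **The two-contact form of the front-wheel driven kinematic car.** The ℝ²-valued
one-form `η_fw = η^1 ⊗ e_1 + η^2 ⊗ e_2` with `η^1 = x_1 dx_2 − dx_3`,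
`η^2 = −(x_1²/2) dx_2 + dx_4` is a two-contact form on `ℝ^4`: at every point,
(a) its kernel is two-dimensional, spanned by `(1,0,0,0)` and `(0,1,x_1,x_1²/2)`;
(b) the joint kernel of `dη^1, dη^2` is `span{(0,0,1,0),(0,0,0,1)}`;
(c) the two kernels intersect trivially. -/
theorem stmt_15 : ∀ x : Fin 4 → ℝ,
    ({v : Fin 4 → ℝ | etaFW1 x v = 0 ∧ etaFW2 x v = 0} =
      ↑(Submodule.span ℝ
        ({![1, 0, 0, 0], ![0, 1, x 0, x 0 ^ 2 / 2]} : Set (Fin 4 → ℝ)))) ∧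
    Module.finrank ℝ
      ↥(Submodule.span ℝ
        ({![1, 0, 0, 0], ![0, 1, x 0, x 0 ^ 2 / 2]} : Set (Fin 4 → ℝ))) = 2 ∧
    ({v : Fin 4 → ℝ | (∀ u, extD etaFW1 x v u = 0) ∧ (∀ u, extD etaFW2 x v u = 0)} =
      ↑(Submodule.span ℝ
        ({![0, 0, 1, 0], ![0, 0, 0, 1]} : Set (Fin 4 → ℝ)))) ∧
    (∀ v : Fin 4 → ℝ, etaFW1 x v = 0 → etaFW2 x v = 0 →
      (∀ u, extD etaFW1 x v u = 0) → (∀ u, extD etaFW2 x v u = 0) → v = 0) := by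
  intro x
  refine ⟨?_, ?_, ?_, ?_⟩
  · ext v
    simp only [Set.mem_ofPred_eq, SetLike.mem_coe, Submodule.mem_span_pair, etaFW1_apply,
      etaFW2_apply]
    constructor
    · rintro ⟨h1, h2⟩
      refine ⟨v 0, v 1, ?_⟩
      ext i
      fin_cases i <;> simp <;> linarith
    · rintro ⟨a, b, rfl⟩
      constructor <;> simp <;> ring
  · have hli : LinearIndependent ℝ
        ![(![1, 0, 0, 0] : Fin 4 → ℝ), ![0, 1, x 0, x 0 ^ 2 / 2]] := by
      rw [LinearIndependent.pair_iff]
      intro s t h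
      have h0 := congrFun h 0
      have h1 := congrFun h 1
      simp at h0 h1
      exact ⟨h0, h1⟩
    have h := finrank_span_eq_card hli
    rw [Matrix.range_cons_cons_empty] at h
    simpa using h
  · ext v
    simp only [Set.mem_ofPred_eq, SetLike.mem_coe, Submodule.mem_span_pair]
    constructor
    · rintro ⟨h1, -⟩
      obtain ⟨h0, h1⟩ := ker_extD_etaFW1 x v h1
      refine ⟨v 2, v 3, ?_⟩
      ext i
      fin_cases i <;> simp [h0, h1]
    · rintro ⟨a, b, rfl⟩
      constructor <;> intro u <;> simp [extD_etaFW1, extD_etaFW2]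
  · intro v h1 h2 h3 _
    obtain ⟨h0, h4⟩ := ker_extD_etaFW1 x v h3
    rw [etaFW1_apply, h4] at h1
    rw [etaFW2_apply, h4] at h2
    ext i
    fin_cases i <;> simp <;> linarith
end

section
/- On ℝ^5 with coordinates (x_1, x_2, x_3, x_4, x_5), consider the ℝ²-valued one-form η_c = Υ^4 ⊗ e_1 + Υ^5 ⊗ e_2 with Υ^4 = −2x_3 dx_1 + dx_4 and Υ^5 = −x_2² dx_1 − 2x_3 dx_2 + dx_5. Then η_c is a two-contact form on ℝ^5: for every x, (a) ker(η_c)_x is three-dimensional, spanned by Y_1(x) = (1, 0, x_2, 2x_3, x_2²), Y_2(x) = (0, 1, 0, 0, 2x_3), and Y_3(x) = (0, 0, 1, 0, 0); (b) the joint kernel ker(dη_c)_x := {v : dΥ^4_x(v,·) = 0 and dΥ^5_x(v,·) = 0} equals span{(0,0,0,1,0), (0,0,0,0,1)}; (c) ker(η_c)_x ∩ ker(dη_c)_x = 0. (This is the two-contact form turning the nilpotent control Lie system of Section 8.1 of the paper into a projectable two-contact Lie system.) -/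
/-- `Υ^4 = −2x_3 dx_1 + dx_4` on `ℝ^5` (coordinates `x_1, …, x_5 = x 0, …, x 4`). -/
noncomputable def etaC4 : (Fin 5 → ℝ) → ((Fin 5 → ℝ) →L[ℝ] ℝ) :=
  fun x => (-2 * x 2) • (ContinuousLinearMap.proj 0 : (Fin 5 → ℝ) →L[ℝ] ℝ) +
    (ContinuousLinearMap.proj 3 : (Fin 5 → ℝ) →L[ℝ] ℝ)

/-- `Υ^5 = −x_2² dx_1 − 2x_3 dx_2 + dx_5` on `ℝ^5`. -/
noncomputable def etaC5 : (Fin 5 → ℝ) → ((Fin 5 → ℝ) →L[ℝ] ℝ) :=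
  fun x => (-(x 1 ^ 2)) • (ContinuousLinearMap.proj 0 : (Fin 5 → ℝ) →L[ℝ] ℝ) +
    (-2 * x 2) • (ContinuousLinearMap.proj 1 : (Fin 5 → ℝ) →L[ℝ] ℝ) +
    (ContinuousLinearMap.proj 4 : (Fin 5 → ℝ) →L[ℝ] ℝ)

theorem proj_hasFDerivAt (i : Fin 5) (x : Fin 5 → ℝ) :
    HasFDerivAt (fun y : Fin 5 → ℝ => y i)
      (ContinuousLinearMap.proj i : (Fin 5 → ℝ) →L[ℝ] ℝ) x :=
  (ContinuousLinearMap.proj i : (Fin 5 → ℝ) →L[ℝ] ℝ).hasFDerivAt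

theorem extD_etaC4 (x v u : Fin 5 → ℝ) :
    extD etaC4 x v u = -2 * v 2 * u 0 + 2 * u 2 * v 0 := by
  have h := (((proj_hasFDerivAt 2 x).const_mul (-2)).smul_const
    (ContinuousLinearMap.proj 0 : (Fin 5 → ℝ) →L[ℝ] ℝ)).add_const
    (ContinuousLinearMap.proj 3 : (Fin 5 → ℝ) →L[ℝ] ℝ)
  have h' : fderiv ℝ etaC4 x = _ := HasFDerivAt.fderiv h
  rw [extD, h']
  simp

theorem extD_etaC5 (x v u : Fin 5 → ℝ) :
    extD etaC5 x v u = -2 * x 1 * (v 1 * u 0 - u 1 * v 0) - 2 * (v 2 * u 1 - u 2 * v 1) := by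
  have h := (((((proj_hasFDerivAt 1 x).pow 2).neg).smul_const
    (ContinuousLinearMap.proj 0 : (Fin 5 → ℝ) →L[ℝ] ℝ)).add
    (((proj_hasFDerivAt 2 x).const_mul (-2)).smul_const
    (ContinuousLinearMap.proj 1 : (Fin 5 → ℝ) →L[ℝ] ℝ))).add_const
    (ContinuousLinearMap.proj 4 : (Fin 5 → ℝ) →L[ℝ] ℝ)
  have h' : fderiv ℝ etaC5 x = _ := HasFDerivAt.fderiv h
  rw [extD, h']
  simp
  ring

theorem joint_ker (x v : Fin 5 → ℝ) (h4 : ∀ u, extD etaC4 x v u = 0)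
    (h5 : ∀ u, extD etaC5 x v u = 0) : v 0 = 0 ∧ v 1 = 0 ∧ v 2 = 0 := by
  have a := h4 ![1, 0, 0, 0, 0]
  have b := h4 ![0, 0, 1, 0, 0]
  have c := h5 ![0, 0, 1, 0, 0]
  rw [extD_etaC4] at a b
  rw [extD_etaC5] at c
  simp at a b c
  exact ⟨b, c, a⟩

/-- **The two-contact form of the nilpotent control Lie system.** The ℝ²-valued
one-form `η_c = Υ^4 ⊗ e_1 + Υ^5 ⊗ e_2` with `Υ^4 = −2x_3 dx_1 + dx_4` and
`Υ^5 = −x_2² dx_1 − 2x_3 dx_2 + dx_5` is a two-contact form on `ℝ^5`: at every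
point, (a) its kernel is three-dimensional, spanned by
`Y_1 = (1, 0, x_2, 2x_3, x_2²)`, `Y_2 = (0, 1, 0, 0, 2x_3)`, `Y_3 = (0, 0, 1, 0, 0)`;
(b) the joint kernel of `dΥ^4, dΥ^5` is `span{(0,0,0,1,0), (0,0,0,0,1)}`;
(c) the two kernels intersect trivially. -/
theorem stmt_17 : ∀ x : Fin 5 → ℝ,
    ({v : Fin 5 → ℝ | etaC4 x v = 0 ∧ etaC5 x v = 0} =
      ↑(Submodule.span ℝ
        ({![1, 0, x 1, 2 * x 2, x 1 ^ 2], ![0, 1, 0, 0, 2 * x 2],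
          ![0, 0, 1, 0, 0]} : Set (Fin 5 → ℝ)))) ∧
    Module.finrank ℝ
      ↥(Submodule.span ℝ
        ({![1, 0, x 1, 2 * x 2, x 1 ^ 2], ![0, 1, 0, 0, 2 * x 2],
          ![0, 0, 1, 0, 0]} : Set (Fin 5 → ℝ))) = 3 ∧
    ({v : Fin 5 → ℝ | (∀ u, extD etaC4 x v u = 0) ∧ (∀ u, extD etaC5 x v u = 0)} =
      ↑(Submodule.span ℝ
        ({![0, 0, 0, 1, 0], ![0, 0, 0, 0, 1]} : Set (Fin 5 → ℝ)))) ∧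
    (∀ v : Fin 5 → ℝ, etaC4 x v = 0 → etaC5 x v = 0 →
      (∀ u, extD etaC4 x v u = 0) → (∀ u, extD etaC5 x v u = 0) → v = 0) := by
  intro x
  refine ⟨?_, ?_, ?_, ?_⟩
  · ext v
    simp only [Set.mem_ofPred_eq, SetLike.mem_coe, Submodule.mem_span_insert,
      Submodule.mem_span_singleton]
    constructor
    · rintro ⟨h4, h5⟩
      simp [etaC4, etaC5] at h4 h5
      refine ⟨v 0, _, ⟨v 1, _, ⟨v 2 - x 1 * v 0, rfl⟩, rfl⟩, ?_⟩
      ext i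
      fin_cases i <;> simp <;> linarith
    · rintro ⟨a, _, ⟨b, _, ⟨c, rfl⟩, rfl⟩, rfl⟩
      simp [etaC4, etaC5]
      constructor <;> ring
  · have hli : LinearIndependent ℝ
        ![(![1, 0, x 1, 2 * x 2, x 1 ^ 2] : Fin 5 → ℝ), ![0, 1, 0, 0, 2 * x 2],
          ![0, 0, 1, 0, 0]] := by
      rw [Fintype.linearIndependent_iff]
      intro g hg
      have h0 := congrFun hg 0
      have h1 := congrFun hg 1
      have h2 := congrFun hg 2
      simp [Fin.sum_univ_three] at h0 h1 h2
      rw [h0] at h2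
      intro i
      fin_cases i
      · exact h0
      · exact h1
      · simpa using h2
    have := finrank_span_eq_card hli
    have hr : ∀ a b c : Fin 5 → ℝ, Set.range ![a, b, c] = {a, b, c} := by
      intro a b c
      ext y
      simp only [Set.mem_range, Fin.exists_fin_succ, Set.mem_insert_iff, Set.mem_singleton_iff]
      simp [eq_comm]
    rw [hr] at this
    simpa only [Fintype.card_fin] using this
  · ext v
    simp only [Set.mem_ofPred_eq, SetLike.mem_coe, Submodule.mem_span_insert,
      Submodule.mem_span_singleton]
    constructor
    · rintro ⟨h4, h5⟩
      obtain ⟨h0, h1, h2⟩ := joint_ker x v h4 h5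
      refine ⟨v 3, _, ⟨v 4, rfl⟩, ?_⟩
      ext i
      fin_cases i <;> simp [h0, h1, h2]
    · rintro ⟨a, _, ⟨b, rfl⟩, rfl⟩
      constructor <;> intro u
      · rw [extD_etaC4]; simp
      · rw [extD_etaC5]; simp
  · intro v e4 e5 h4 h5
    obtain ⟨h0, h1, h2⟩ := joint_ker x v h4 h5
    simp [etaC4, etaC5, h0, h1] at e4 e5
    ext i
    fin_cases i <;> simp [h0, h1, h2, e4, e5]
end

section
/- On ℝ^8 with coordinates (x_1, …, x_8), consider the ℝ^6-valued one-form η_3b = Σ_{α=3}^8 η^α ⊗ e_α with η^3 = dx_3 − x_2 dx_1, η^4 = (x_1x_2 − (1/2)x_3) dx_1 − (1/2)x_1 dx_3 − (1/2) dx_4, η^5 = (1/2)x_2² dx_1 − dx_5, η^6 = (1/6)(2x_3x_1 − 3x_2x_1² + x_4) dx_1 + (1/6)x_1² dx_3 + (1/6)x_1 dx_4 + (1/3) dx_6, η^7 = (x_5 − (1/2)x_1x_2²) dx_1 − (1/2)x_3 dx_3 + x_1 dx_5 + (1/2) dx_7, and η^8 = −(1/6)x_2³ dx_1 + dx_8.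 Then η_3b is a six-contact form on ℝ^8: for every point x, (a) ker(η_3b)_x := {v : η^α_x(v) = 0 for α = 3,…,8} is two-dimensional, spanned by Y_1(x) = (1, 0, x_2, x_1x_2 − x_3, (1/2)x_2², (1/2)(x_1(x_1x_2 − x_3) − x_4), x_2x_3 − 2x_5, (1/6)x_2³) and Y_2(x) = (0, 1, 0, 0, 0, 0, 0, 0); (b) the joint kernel ker(dη_3b)_x := {v : dη^α_x(v,·) = 0 for α = 3,…,8} equals {v ∈ ℝ^8 : v_1 = v_2 = 0}, which is six-dimensional; (c) ker(η_3b)_x ∩ ker(dη_3b)_x = 0. (This is the six-contact form compatible with the degree-three generalisation of the Brockett control system.) -/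
/-- The coordinate projection `dx_i` on `ℝ^8` (index `i = 0, …, 7` for `x_1, …, x_8`). -/
noncomputable def dx8 (i : Fin 8) : (Fin 8 → ℝ) →L[ℝ] ℝ := ContinuousLinearMap.proj i

/-- `η^3 = dx_3 − x_2 dx_1`. -/
noncomputable def eta3b3 : (Fin 8 → ℝ) → ((Fin 8 → ℝ) →L[ℝ] ℝ) :=
  fun x => dx8 2 - x 1 • dx8 0

/-- `η^4 = (x_1x_2 − x_3/2) dx_1 − (x_1/2) dx_3 − (1/2) dx_4`. -/
noncomputable def eta3b4 : (Fin 8 → ℝ) → ((Fin 8 → ℝ) →L[ℝ] ℝ) :=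
  fun x => (x 0 * x 1 - x 2 / 2) • dx8 0 - (x 0 / 2) • dx8 2 - (1 / 2 : ℝ) • dx8 3

/-- `η^5 = (x_2²/2) dx_1 − dx_5`. -/
noncomputable def eta3b5 : (Fin 8 → ℝ) → ((Fin 8 → ℝ) →L[ℝ] ℝ) :=
  fun x => (x 1 ^ 2 / 2) • dx8 0 - dx8 4

/-- `η^6 = (1/6)(2x_3x_1 − 3x_2x_1² + x_4) dx_1 + (x_1²/6) dx_3 + (x_1/6) dx_4 + (1/3) dx_6`. -/
noncomputable def eta3b6 : (Fin 8 → ℝ) → ((Fin 8 → ℝ) →L[ℝ] ℝ) :=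
  fun x => ((2 * x 2 * x 0 - 3 * x 1 * x 0 ^ 2 + x 3) / 6) • dx8 0 +
    (x 0 ^ 2 / 6) • dx8 2 + (x 0 / 6) • dx8 3 + (1 / 3 : ℝ) • dx8 5

/-- `η^7 = (x_5 − x_1x_2²/2) dx_1 − (x_3/2) dx_3 + x_1 dx_5 + (1/2) dx_7`. -/
noncomputable def eta3b7 : (Fin 8 → ℝ) → ((Fin 8 → ℝ) →L[ℝ] ℝ) :=
  fun x => (x 4 - x 0 * x 1 ^ 2 / 2) • dx8 0 - (x 2 / 2) • dx8 2 +
    x 0 • dx8 4 + (1 / 2 : ℝ) • dx8 6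

/-- `η^8 = −(x_2³/6) dx_1 + dx_8`. -/
noncomputable def eta3b8 : (Fin 8 → ℝ) → ((Fin 8 → ℝ) →L[ℝ] ℝ) :=
  fun x => (-(x 1 ^ 3 / 6)) • dx8 0 + dx8 7

/-- The subspace `{v ∈ ℝ^8 : v_1 = v_2 = 0}`. -/
noncomputable def K8 : Submodule ℝ (Fin 8 → ℝ) :=
  LinearMap.ker (LinearMap.proj 0 : (Fin 8 → ℝ) →ₗ[ℝ] ℝ) ⊓
    LinearMap.ker (LinearMap.proj 1 : (Fin 8 → ℝ) →ₗ[ℝ] ℝ)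


theorem extD_eq {θ : (Fin 8 → ℝ) → ((Fin 8 → ℝ) →L[ℝ] ℝ)} {x : Fin 8 → ℝ}
    {θ' : (Fin 8 → ℝ) →L[ℝ] ((Fin 8 → ℝ) →L[ℝ] ℝ)} (h : HasFDerivAt θ θ' x)
    (u v : Fin 8 → ℝ) : extD θ x u v = θ' u v - θ' v u := by
  simp only [extD, h.fderiv]

theorem coord_deriv (x : Fin 8 → ℝ) (i : Fin 8) :
    HasFDerivAt (fun y : Fin 8 → ℝ => y i) (dx8 i) x := (dx8 i).hasFDerivAt

@[simp] theorem dx8_apply (i : Fin 8) (v : Fin 8 → ℝ) : dx8 i v = v i := rfl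

theorem extD3 (x u v : Fin 8 → ℝ) : extD eta3b3 x u v = u 0 * v 1 - u 1 * v 0 := by
  have h := ((coord_deriv x 1).smul_const (dx8 0)).const_sub (dx8 2)
  rw [extD_eq (θ := eta3b3) h]
  simp
  ring

theorem extD4 (x u v : Fin 8 → ℝ) :
    extD eta3b4 x u v = - x 0 * (u 0 * v 1 - u 1 * v 0) := by
  have h := (((((coord_deriv x 0).mul (coord_deriv x 1)).sub
    ((coord_deriv x 2).mul_const (2⁻¹ : ℝ))).smul_const (dx8 0)).sub
    (((coord_deriv x 0).mul_const (2⁻¹ : ℝ)).smul_const (dx8 2))).sub_const ((1 / 2 : ℝ) • dx8 3)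
  rw [extD_eq (θ := eta3b4) h]
  simp
  ring

theorem extD5 (x u v : Fin 8 → ℝ) :
    extD eta3b5 x u v = - x 1 * (u 0 * v 1 - u 1 * v 0) := by
  have h := ((((coord_deriv x 1).pow 2).mul_const (2⁻¹ : ℝ)).smul_const (dx8 0)).sub_const (dx8 4)
  rw [extD_eq (θ := eta3b5) h]
  simp
  ring

theorem extD6 (x u v : Fin 8 → ℝ) :
    extD eta3b6 x u v = x 0 ^ 2 / 2 * (u 0 * v 1 - u 1 * v 0) := by
  have h := (((((((((coord_deriv x 2).const_mul 2).mul (coord_deriv x 0)).sub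
    (((coord_deriv x 1).const_mul 3).mul ((coord_deriv x 0).pow 2))).add
    (coord_deriv x 3)).mul_const (6⁻¹ : ℝ)).smul_const (dx8 0)).add
    ((((coord_deriv x 0).pow 2).mul_const (6⁻¹ : ℝ)).smul_const (dx8 2))).add
    (((coord_deriv x 0).mul_const (6⁻¹ : ℝ)).smul_const (dx8 3))).add_const ((1 / 3 : ℝ) • dx8 5)
  rw [extD_eq (θ := eta3b6) h]
  simp
  ring

theorem extD7 (x u v : Fin 8 → ℝ) :
    extD eta3b7 x u v = x 0 * x 1 * (u 0 * v 1 - u 1 * v 0) := by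
  have h := ((((((coord_deriv x 4).sub (((coord_deriv x 0).mul
    ((coord_deriv x 1).pow 2)).mul_const (2⁻¹ : ℝ))).smul_const (dx8 0)).sub
    (((coord_deriv x 2).mul_const (2⁻¹ : ℝ)).smul_const (dx8 2))).add
    ((coord_deriv x 0).smul_const (dx8 4)))).add_const ((1 / 2 : ℝ) • dx8 6)
  rw [extD_eq (θ := eta3b7) h]
  simp
  ring

theorem extD8 (x u v : Fin 8 → ℝ) :
    extD eta3b8 x u v = x 1 ^ 2 / 2 * (u 0 * v 1 - u 1 * v 0) := by
  have h := ((((coord_deriv x 1).pow 3).mul_const (6⁻¹ : ℝ)).neg.smul_const (dx8 0)).add_const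
    (dx8 7)
  rw [extD_eq (θ := eta3b8) h]
  simp
  ring

theorem mem_K8 (v : Fin 8 → ℝ) : v ∈ K8 ↔ v 0 = 0 ∧ v 1 = 0 := by
  simp [K8]

theorem finrank_K8 : Module.finrank ℝ ↥K8 = 6 := by
  let f : (Fin 8 → ℝ) →ₗ[ℝ] (Fin 2 → ℝ) :=
    LinearMap.pi ![LinearMap.proj 0, LinearMap.proj 1]
  have hk : K8 = LinearMap.ker f := by
    ext v
    rw [mem_K8, LinearMap.mem_ker]
    constructor
    · rintro ⟨h0, h1⟩
      ext i
      fin_cases i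
      · exact h0
      · exact h1
    · intro h
      exact ⟨congrFun h 0, congrFun h 1⟩
  have hs : LinearMap.range f = ⊤ := by
    rw [LinearMap.range_eq_top]
    intro w
    refine ⟨![w 0, w 1, 0, 0, 0, 0, 0, 0], ?_⟩
    ext i
    fin_cases i <;> rfl
  have := f.finrank_range_add_finrank_ker
  rw [hs, finrank_top] at this
  simp only [Module.finrank_fin_fun] at this
  rw [hk]
  omega

theorem mem_extD_ker (x v : Fin 8 → ℝ) (h : ∀ u, extD eta3b3 x v u = 0) :
    v 0 = 0 ∧ v 1 = 0 := by
  have h1 := h ![0, 1, 0, 0, 0, 0, 0, 0]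
  have h2 := h ![1, 0, 0, 0, 0, 0, 0, 0]
  rw [extD3] at h1 h2
  simp at h1 h2
  exact ⟨h1, h2⟩

theorem eta_ker (x v : Fin 8 → ℝ) (h3 : eta3b3 x v = 0) (h4 : eta3b4 x v = 0)
    (h5 : eta3b5 x v = 0) (h6 : eta3b6 x v = 0) (h7 : eta3b7 x v = 0) (h8 : eta3b8 x v = 0) :
    v 2 = x 1 * v 0 ∧ v 3 = (x 0 * x 1 - x 2) * v 0 ∧ v 4 = x 1 ^ 2 / 2 * v 0 ∧
    v 5 = (x 0 * (x 0 * x 1 - x 2) - x 3) / 2 * v 0 ∧ v 6 = (x 1 * x 2 - 2 * x 4) * v 0 ∧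
    v 7 = x 1 ^ 3 / 6 * v 0 := by
  simp [eta3b3, eta3b4, eta3b5, eta3b6, eta3b7, eta3b8] at h3 h4 h5 h6 h7 h8
  have e2 : v 2 = x 1 * v 0 := by linarith
  rw [e2] at h4 h6 h7
  have e3 : v 3 = (x 0 * x 1 - x 2) * v 0 := by linarith
  have e4 : v 4 = x 1 ^ 2 / 2 * v 0 := by linarith
  rw [e3] at h6
  rw [e4] at h7
  refine ⟨e2, e3, e4, by linarith, by linarith, by linarith⟩

/-- **The six-contact form of the degree-three Brockett control system.** The
ℝ^6-valued one-form `η_3b = Σ_{α=3}^8 η^α ⊗ e_α` above is a six-contact form on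
`ℝ^8`: at every point, (a) its kernel is two-dimensional, spanned by
`Y_1 = (1, 0, x_2, x_1x_2 − x_3, x_2²/2, (x_1(x_1x_2 − x_3) − x_4)/2, x_2x_3 − 2x_5, x_2³/6)`
and `Y_2 = (0, 1, 0, 0, 0, 0, 0, 0)`; (b) the joint kernel of `dη^3, …, dη^8`
equals `{v : v_1 = v_2 = 0}`, which is six-dimensional; (c) the two kernels
intersect trivially. -/
theorem stmt_18 : ∀ x : Fin 8 → ℝ,
    ({v : Fin 8 → ℝ | eta3b3 x v = 0 ∧ eta3b4 x v = 0 ∧ eta3b5 x v = 0 ∧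
        eta3b6 x v = 0 ∧ eta3b7 x v = 0 ∧ eta3b8 x v = 0} =
      ↑(Submodule.span ℝ
        ({![1, 0, x 1, x 0 * x 1 - x 2, x 1 ^ 2 / 2,
            (x 0 * (x 0 * x 1 - x 2) - x 3) / 2, x 1 * x 2 - 2 * x 4, x 1 ^ 3 / 6],
          ![0, 1, 0, 0, 0, 0, 0, 0]} : Set (Fin 8 → ℝ)))) ∧
    Module.finrank ℝ
      ↥(Submodule.span ℝ
        ({![1, 0, x 1, x 0 * x 1 - x 2, x 1 ^ 2 / 2,
            (x 0 * (x 0 * x 1 - x 2) - x 3) / 2, x 1 * x 2 - 2 * x 4, x 1 ^ 3 / 6],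
          ![0, 1, 0, 0, 0, 0, 0, 0]} : Set (Fin 8 → ℝ))) = 2 ∧
    ({v : Fin 8 → ℝ | (∀ u, extD eta3b3 x v u = 0) ∧ (∀ u, extD eta3b4 x v u = 0) ∧
        (∀ u, extD eta3b5 x v u = 0) ∧ (∀ u, extD eta3b6 x v u = 0) ∧
        (∀ u, extD eta3b7 x v u = 0) ∧ (∀ u, extD eta3b8 x v u = 0)} = ↑K8) ∧
    Module.finrank ℝ ↥K8 = 6 ∧
    (∀ v : Fin 8 → ℝ,
      eta3b3 x v = 0 → eta3b4 x v = 0 → eta3b5 x v = 0 →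
      eta3b6 x v = 0 → eta3b7 x v = 0 → eta3b8 x v = 0 →
      (∀ u, extD eta3b3 x v u = 0) → (∀ u, extD eta3b4 x v u = 0) →
      (∀ u, extD eta3b5 x v u = 0) → (∀ u, extD eta3b6 x v u = 0) →
      (∀ u, extD eta3b7 x v u = 0) → (∀ u, extD eta3b8 x v u = 0) → v = 0) := by
  intro x
  refine ⟨?_, ?_, ?_, finrank_K8, ?_⟩
  · ext v
    simp only [Set.mem_setOf_eq, SetLike.mem_coe, Submodule.mem_span_pair]
    constructor
    · rintro ⟨h3, h4, h5, h6, h7, h8⟩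
      obtain ⟨e2, e3, e4, e5, e6, e7⟩ := eta_ker x v h3 h4 h5 h6 h7 h8
      refine ⟨v 0, v 1, ?_⟩
      ext i
      fin_cases i <;> simp [e2, e3, e4, e5, e6, e7] <;> ring
    · rintro ⟨a, b, rfl⟩
      simp [eta3b3, eta3b4, eta3b5, eta3b6, eta3b7, eta3b8]
      refine ⟨?_, ?_, ?_, ?_, ?_, ?_⟩ <;> ring
  · have hli : LinearIndependent ℝ
        ![(![1, 0, x 1, x 0 * x 1 - x 2, x 1 ^ 2 / 2,
            (x 0 * (x 0 * x 1 - x 2) - x 3) / 2, x 1 * x 2 - 2 * x 4, x 1 ^ 3 / 6] : Fin 8 → ℝ),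
          ![0, 1, 0, 0, 0, 0, 0, 0]] := by
      rw [LinearIndependent.pair_iff]
      intro s t h
      have h0 := congrFun h 0
      have h1 := congrFun h 1
      simp at h0 h1
      exact ⟨h0, h1⟩
    have := finrank_span_eq_card hli
    rw [Matrix.range_cons_cons_empty] at this
    simpa using this
  · ext v
    simp only [Set.mem_setOf_eq, SetLike.mem_coe, mem_K8]
    constructor
    · rintro ⟨h, -⟩
      exact mem_extD_ker x v h
    · rintro ⟨h0, h1⟩
      simp [extD3, extD4, extD5, extD6, extD7, extD8, h0, h1]
  · intro v h3 h4 h5 h6 h7 h8 h _ _ _ _ _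
    obtain ⟨h0, h1⟩ := mem_extD_ker x v h
    obtain ⟨e2, e3, e4, e5, e6, e7⟩ := eta_ker x v h3 h4 h5 h6 h7 h8
    ext i
    fin_cases i <;> simp [e2, e3, e4, e5, e6, e7, h0, h1]
end

section
/- Let η = (η^1, …, η^k) be a smooth ℝ^k-valued differential one-form on an open set U ⊆ ℝ^m with Reeb vector fields R_1, …, R_k. Let f = (f^1,…,f^k), g = (g^1,…,g^k), h = (h^1,…,h^k) be smooth ℝ^k-valued functions on U that are first integrals of all Reeb vector fields (R_βf^α = R_βg^α = R_βh^α = 0 for all α, β), and define g⋆h := (g^1h^1, …, g^kh^k). Suppose X_f, X_g, X_h and X_{g⋆h} are η-Hamiltonian vector fields with η-Hamiltonian k-functions f, g, h and g⋆h, respectively. Then for each α ∈ {1,…,k} and all x ∈ U: η^α_x([X_f, X_{g⋆h}](x)) = η^α_x([X_f, X_g](x))·h^α(x) + g^α(x)·η^α_x([X_f, X_h](x)). (This is the Leibniz identity {f, g⋆h}_η = {f,g}_η ⋆ h + g ⋆ {f,h}_η making the first integrals of the Reeb vector fields in C^∞_η(M, ℝ^k) a Poisson algebra.) -/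
theorem aux_pair_s19 {E : Type*} [NormedAddCommGroup E] [NormedSpace ℝ E]
    {θ : E → (E →L[ℝ] ℝ)} {Y : E → E} {p : E → ℝ} {x : E}
    (hθ : DifferentiableAt ℝ θ x) (hY : DifferentiableAt ℝ Y x)
    (hp : ∀ᶠ y in nhds x, θ y (Y y) = -(p y)) (v : E) :
    θ x (fderiv ℝ Y x v) = -(fderiv ℝ p x v) - fderiv ℝ θ x v (Y x) := by
  have h1 : fderiv ℝ (fun y => θ y (Y y)) x = fderiv ℝ (fun y => -(p y)) x :=
    Filter.EventuallyEq.fderiv_eq hp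
  have h2 := fderiv_clm_apply hθ hY
  rw [h1, fderiv_fun_neg] at h2
  have h3 := congrArg (fun L : E →L[ℝ] ℝ => L v) h2
  simp at h3
  linarith

theorem aux_bracket {E : Type*} [NormedAddCommGroup E] [NormedSpace ℝ E]
    {θ : E → (E →L[ℝ] ℝ)} {X Y : E → E} {f p : E → ℝ} {x : E}
    (hθ : DifferentiableAt ℝ θ x) (hX : DifferentiableAt ℝ X x)
    (hY : DifferentiableAt ℝ Y x)
    (hf : ∀ᶠ y in nhds x, θ y (X y) = -(f y))
    (hp : ∀ᶠ y in nhds x, θ y (Y y) = -(p y))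
    (hd : ∀ v, extD θ x (X x) v = fderiv ℝ f x v) :
    θ x (lieBr X Y x) = -(fderiv ℝ p x (X x)) := by
  have h1 := aux_pair_s19 hθ hX hf (Y x)
  have h2 := aux_pair_s19 hθ hY hp (X x)
  have h3 := hd (Y x)
  unfold extD at h3
  unfold lieBr
  rw [map_sub, h1, h2]
  linarith

/-- **Leibniz identity `{f, g⋆h}_η = {f, g}_η ⋆ h + g ⋆ {f, h}_η`.** Let `η` be a
smooth `ℝ^k`-valued one-form on an open `U ⊆ ℝ^m` with Reeb vector fields
`R_1, …, R_k`, let `f, g, h` be smooth `ℝ^k`-valued functions that are first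
integrals of all Reeb vector fields, and let `g⋆h := (g^1h^1, …, g^kh^k)`.
If `X_f, X_g, X_h, X_{g⋆h}` are `η`-Hamiltonian vector fields with
`η`-Hamiltonian k-functions `f, g, h, g⋆h` respectively, then for each `α` and
`x ∈ U`: `η^α([X_f, X_{g⋆h}]) = η^α([X_f, X_g])·h^α + g^α·η^α([X_f, X_h])`. -/
theorem stmt_19 (m k : ℕ) (U : Set (Fin m → ℝ)) (hU : IsOpen U)
    (η : Fin k → (Fin m → ℝ) → ((Fin m → ℝ) →L[ℝ] ℝ))
    (hη : ∀ α, ContDiffOn ℝ (⊤ : ℕ∞) (η α) U)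
    (R : Fin k → (Fin m → ℝ) → (Fin m → ℝ))
    (hRs : ∀ α, ContDiffOn ℝ (⊤ : ℕ∞) (R α) U)
    (hReeb : ∀ x ∈ U, ∀ α β : Fin k,
      η β x (R α x) = (if α = β then (1 : ℝ) else 0) ∧
      ∀ v, extD (η β) x (R α x) v = 0)
    (f g h : Fin k → (Fin m → ℝ) → ℝ)
    (hfs : ∀ α, ContDiffOn ℝ (⊤ : ℕ∞) (f α) U)
    (hgs : ∀ α, ContDiffOn ℝ (⊤ : ℕ∞) (g α) U)
    (hhs : ∀ α, ContDiffOn ℝ (⊤ : ℕ∞) (h α) U)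
    (hFIf : ∀ x ∈ U, ∀ α β : Fin k, fderiv ℝ (f α) x (R β x) = 0)
    (hFIg : ∀ x ∈ U, ∀ α β : Fin k, fderiv ℝ (g α) x (R β x) = 0)
    (hFIh : ∀ x ∈ U, ∀ α β : Fin k, fderiv ℝ (h α) x (R β x) = 0)
    (Xf Xg Xh Xgh : (Fin m → ℝ) → (Fin m → ℝ))
    (hXfs : ContDiffOn ℝ (⊤ : ℕ∞) Xf U) (hXgs : ContDiffOn ℝ (⊤ : ℕ∞) Xg U)
    (hXhs : ContDiffOn ℝ (⊤ : ℕ∞) Xh U) (hXghs : ContDiffOn ℝ (⊤ : ℕ∞) Xgh U)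
    (hHamf : ∀ x ∈ U, ∀ α : Fin k,
      η α x (Xf x) = -(f α x) ∧
      ∀ v, extD (η α) x (Xf x) v =
        fderiv ℝ (f α) x v - ∑ β, fderiv ℝ (f α) x (R β x) * η β x v)
    (hHamg : ∀ x ∈ U, ∀ α : Fin k,
      η α x (Xg x) = -(g α x) ∧
      ∀ v, extD (η α) x (Xg x) v =
        fderiv ℝ (g α) x v - ∑ β, fderiv ℝ (g α) x (R β x) * η β x v)
    (hHamh : ∀ x ∈ U, ∀ α : Fin k,
      η α x (Xh x) = -(h α x) ∧
      ∀ v, extD (η α) x (Xh x) v =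
        fderiv ℝ (h α) x v - ∑ β, fderiv ℝ (h α) x (R β x) * η β x v)
    (hHamgh : ∀ x ∈ U, ∀ α : Fin k,
      η α x (Xgh x) = -(g α x * h α x) ∧
      ∀ v, extD (η α) x (Xgh x) v =
        fderiv ℝ (fun y => g α y * h α y) x v -
          ∑ β, fderiv ℝ (fun y => g α y * h α y) x (R β x) * η β x v) :
    ∀ α : Fin k, ∀ x ∈ U,
      η α x (lieBr Xf Xgh x) =
        η α x (lieBr Xf Xg x) * h α x + g α x * η α x (lieBr Xf Xh x) := by
  intro α x hx
  have hn : U ∈ nhds x := hU.mem_nhds hx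
  have ht : ((⊤ : ℕ∞) : WithTop ℕ∞) ≠ 0 := by simp
  have hd : ∀ v, extD (η α) x (Xf x) v = fderiv ℝ (f α) x v := by
    intro v
    rw [(hHamf x hx α).2 v]
    simp [hFIf x hx α]
  have dη := ((hη α).contDiffAt hn).differentiableAt ht
  have df := (hXfs.contDiffAt hn).differentiableAt ht
  have dg := (hXgs.contDiffAt hn).differentiableAt ht
  have dh := (hXhs.contDiffAt hn).differentiableAt ht
  have dgh := (hXghs.contDiffAt hn).differentiableAt ht
  have ef : ∀ᶠ y in nhds x, η α y (Xf y) = -(f α y) :=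
    Filter.mem_of_superset hn fun y hy => (hHamf y hy α).1
  have eg : ∀ᶠ y in nhds x, η α y (Xg y) = -(g α y) :=
    Filter.mem_of_superset hn fun y hy => (hHamg y hy α).1
  have eh : ∀ᶠ y in nhds x, η α y (Xh y) = -(h α y) :=
    Filter.mem_of_superset hn fun y hy => (hHamh y hy α).1
  have egh : ∀ᶠ y in nhds x, η α y (Xgh y) = -((fun y => g α y * h α y) y) :=
    Filter.mem_of_superset hn fun y hy => (hHamgh y hy α).1
  rw [aux_bracket dη df dgh ef egh hd, aux_bracket dη df dg ef eg hd,
    aux_bracket dη df dh ef eh hd,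
    fderiv_fun_mul (((hgs α).contDiffAt hn).differentiableAt ht)
      (((hhs α).contDiffAt hn).differentiableAt ht)]
  simp
  ring
end
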